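/- arXiv:quant-ph/0606225 — 3 statements merged into one kernel-verified Lean document; each statement's English description precedes it below -/
import Mathlib

section
/- Outer bound for fully quantum distributed compression: let φ^{ABR} be a pure state on A⊗B⊗R. If a rate pair (Q_A, Q_B) of nonnegative reals is achievable for φ, then Q_A ≥ ½ I(A;R)_φ, Q_B ≥ ½ I(B;R)_φ, and Q_A + Q_B ≥ ½ J(A;B)_φ − E_sq(φ^{AB}). -/
open Matrix
open scoped ComplexOrder

open Classical in
/-- Von Neumann entropy `H(M) = −Tr[M log₂ M]`, via eigenvalues (with `0 log 0 = 0`). -/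
noncomputable def vnEntropy {n : Type*} [Fintype n] [DecidableEq n] (M : Matrix n n ℂ) : ℝ :=
  if h : M.IsHermitian then ∑ i, -(h.eigenvalues i * Real.logb 2 (h.eigenvalues i)) else 0

/-- Reduced state on `A` of a state vector on `A ⊗ (B × R)`. -/
noncomputable def redA {ιA ιB ιR : Type} [Fintype ιB] [Fintype ιR]
    (v : ιA × (ιB × ιR) → ℂ) : Matrix ιA ιA ℂ :=
  Matrix.of fun a a' => ∑ q : ιB × ιR, v (a, q) * star (v (a', q))

/-- Reduced state on `R` of a state vector on `A ⊗ (B × R)`. -/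
noncomputable def redR {ιA ιB ιR : Type} [Fintype ιA] [Fintype ιB]
    (v : ιA × (ιB × ιR) → ℂ) : Matrix ιR ιR ℂ :=
  Matrix.of fun r r' => ∑ a : ιA, ∑ b : ιB, v (a, (b, r)) * star (v (a, (b, r')))

/-- Reduced state on `A ⊗ R` of a state vector on `A ⊗ (B × R)`. -/
noncomputable def redAR {ιA ιB ιR : Type} [Fintype ιB]
    (v : ιA × (ιB × ιR) → ℂ) : Matrix (ιA × ιR) (ιA × ιR) ℂ :=
  Matrix.of fun p q => ∑ b : ιB, v (p.1, (b, p.2)) * star (v (q.1, (b, q.2)))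

/-- The `n`-copy state vector `|φ⟩^{⊗n}` of `φ` on `A ⊗ (B × R)`, written on
`R^{⊗n} ⊗ (A^{⊗n} ⊗ B^{⊗n})`. -/
noncomputable def iidVec {ιA ιB ιR : Type} (φ : ιA × (ιB × ιR) → ℂ) (n : ℕ) :
    (Fin n → ιR) × ((Fin n → ιA) × (Fin n → ιB)) → ℂ :=
  fun p => ∏ k : Fin n, φ (p.2.1 k, (p.2.2 k, p.1 k))

/-- The global isometry `I_{R^n} ⊗ (D ∘ (E_A ⊗ E_B))` of a distributed compression code,
with the output ordered as `(R^n × (Â × B̂)) × ((W_A × W_B) × W_C)`. -/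
noncomputable def codeMap {ιA ιB ιR : Type} {n : ℕ} {γA ωA γB ωB ωC : Type}
    [Fintype γA] [Fintype γB] [Fintype ιR] [DecidableEq ιR]
    (EA : Matrix (γA × ωA) (Fin n → ιA) ℂ)
    (EB : Matrix (γB × ωB) (Fin n → ιB) ℂ)
    (D : Matrix (((Fin n → ιA) × (Fin n → ιB)) × ωC) (γA × γB) ℂ) :
    Matrix (((Fin n → ιR) × ((Fin n → ιA) × (Fin n → ιB))) × ((ωA × ωB) × ωC))
      ((Fin n → ιR) × ((Fin n → ιA) × (Fin n → ιB))) ℂ :=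
  Matrix.of fun p q =>
    if p.1.1 = q.1 then
      ∑ cA : γA, ∑ cB : γB,
        D (p.1.2, p.2.2) (cA, cB) * EA (cA, p.2.1.1) q.2.1 * EB (cB, p.2.1.2) q.2.2
    else 0

/-- The fidelity `F = ⟨ψ'| Tr_{W_AW_BW_C}[(I ⊗ D∘(E_A⊗E_B)) ψ' (…)†] |ψ'⟩` of a
distributed compression code on `n` copies of `φ`, where `|ψ'⟩ = |φ⟩^{⊗n}`. -/
noncomputable def codeFidelity {ιA ιB ιR : Type} {n : ℕ} {γA ωA γB ωB ωC : Type}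
    [Fintype ιA] [Fintype ιB] [Fintype ιR] [DecidableEq ιR]
    [Fintype γA] [Fintype γB] [Fintype ωA] [Fintype ωB] [Fintype ωC]
    (φ : ιA × (ιB × ιR) → ℂ)
    (EA : Matrix (γA × ωA) (Fin n → ιA) ℂ)
    (EB : Matrix (γB × ωB) (Fin n → ιB) ℂ)
    (D : Matrix (((Fin n → ιA) × (Fin n → ιB)) × ωC) (γA × γB) ℂ) : ℝ :=
  (star (iidVec φ n) ⬝ᵥ
    (Matrix.of fun i j : (Fin n → ιR) × ((Fin n → ιA) × (Fin n → ιB)) =>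
        ∑ w : (ωA × ωB) × ωC,
          (codeMap (ιR := ιR) EA EB D *
              Matrix.vecMulVec (iidVec φ n) (star (iidVec φ n)) *
              (codeMap (ιR := ιR) EA EB D)ᴴ) (i, w) (j, w)).mulVec
      (iidVec φ n)).re

/-- Reduced state on `A ⊗ B` of a state vector on `A ⊗ (B × R)`. -/
noncomputable def redAB {ιA ιB ιR : Type} [Fintype ιR]
    (v : ιA × (ιB × ιR) → ℂ) : Matrix (ιA × ιB) (ιA × ιB) ℂ :=
  Matrix.of fun p q => ∑ r : ιR, v (p.1, (p.2, r)) * star (v (q.1, (q.2, r)))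

/-- Reduced state on `B` of a state vector on `A ⊗ (B × R)`. -/
noncomputable def redB {ιA ιB ιR : Type} [Fintype ιA] [Fintype ιR]
    (v : ιA × (ιB × ιR) → ℂ) : Matrix ιB ιB ℂ :=
  Matrix.of fun b b' => ∑ a : ιA, ∑ r : ιR, v (a, (b, r)) * star (v (a, (b', r)))

/-- Reduced state on `B ⊗ R` of a state vector on `A ⊗ (B × R)`. -/
noncomputable def redBR {ιA ιB ιR : Type} [Fintype ιA]
    (v : ιA × (ιB × ιR) → ℂ) : Matrix (ιB × ιR) (ιB × ιR) ℂ :=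
  Matrix.of fun p q => ∑ a : ιA, v (a, (p.1, p.2)) * star (v (a, (q.1, q.2)))

/-- A rate pair `(Q_A, Q_B)` is achievable for the source `φ^{ABR}` if for every `ε > 0`
there is `N` such that for every `n ≥ N` there is a distributed compression code on `n`
copies of `φ` (isometric encoders `E_A : A^{⊗n} → C_A ⊗ W_A`, `E_B : B^{⊗n} → C_B ⊗ W_B`
and an isometric decoder `D : C_A ⊗ C_B → Â ⊗ B̂ ⊗ W_C`) with `log₂ d_{C_A} ≤ n Q_A`,
`log₂ d_{C_B} ≤ n Q_B`, and fidelity at least `1 − ε`. -/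
noncomputable def achievable {ιA ιB ιR : Type}
    [Fintype ιA] [DecidableEq ιA] [Fintype ιB] [DecidableEq ιB]
    [Fintype ιR] [DecidableEq ιR]
    (φ : ιA × (ιB × ιR) → ℂ) (QA QB : ℝ) : Prop :=
  ∀ ε : ℝ, 0 < ε → ∃ N : ℕ, ∀ n : ℕ, N ≤ n →
    ∃ (dCA dWA dCB dWB dWC : ℕ)
      (EA : Matrix (Fin dCA × Fin dWA) (Fin n → ιA) ℂ)
      (EB : Matrix (Fin dCB × Fin dWB) (Fin n → ιB) ℂ)
      (D : Matrix (((Fin n → ιA) × (Fin n → ιB)) × Fin dWC) (Fin dCA × Fin dCB) ℂ),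
      EAᴴ * EA = 1 ∧ EBᴴ * EB = 1 ∧ Dᴴ * D = 1 ∧
      Real.logb 2 dCA ≤ (n : ℝ) * QA ∧ Real.logb 2 dCB ≤ (n : ℝ) * QB ∧
      1 - ε ≤ codeFidelity φ EA EB D

/-- Reduced state on `A ⊗ E` of a density operator on `(A × B) × E`. -/
noncomputable def extRedAE {ιA ιB ιE : Type} [Fintype ιB]
    (ρ : Matrix ((ιA × ιB) × ιE) ((ιA × ιB) × ιE) ℂ) : Matrix (ιA × ιE) (ιA × ιE) ℂ :=
  Matrix.of fun p q => ∑ b : ιB, ρ ((p.1, b), p.2) ((q.1, b), q.2)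

/-- Reduced state on `B ⊗ E` of a density operator on `(A × B) × E`. -/
noncomputable def extRedBE {ιA ιB ιE : Type} [Fintype ιA]
    (ρ : Matrix ((ιA × ιB) × ιE) ((ιA × ιB) × ιE) ℂ) : Matrix (ιB × ιE) (ιB × ιE) ℂ :=
  Matrix.of fun p q => ∑ a : ιA, ρ ((a, p.1), p.2) ((a, q.1), q.2)

/-- Reduced state on `E` of a density operator on `(A × B) × E`. -/
noncomputable def extRedE {ιA ιB ιE : Type} [Fintype ιA] [Fintype ιB]
    (ρ : Matrix ((ιA × ιB) × ιE) ((ιA × ιB) × ιE) ℂ) : Matrix ιE ιE ℂ :=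
  Matrix.of fun e e' => ∑ ab : ιA × ιB, ρ (ab, e) (ab, e')

/-- Squashed entanglement `E_sq(φ^{AB}) = inf ½ I(A;B|E)_ρ`, the infimum over all
finite-dimensional extensions `ρ^{ABE}` of `φ^{AB}`, where
`I(A;B|E) = H(AE) + H(BE) − H(ABE) − H(E)`. -/
noncomputable def squashedEntanglement {ιA ιB : Type}
    [Fintype ιA] [DecidableEq ιA] [Fintype ιB] [DecidableEq ιB]
    (φAB : Matrix (ιA × ιB) (ιA × ιB) ℂ) : ℝ :=
  sInf { x : ℝ |
    ∃ (dE : ℕ) (ρ : Matrix ((ιA × ιB) × Fin dE) ((ιA × ιB) × Fin dE) ℂ),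
      ρ.PosSemidef ∧ ρ.trace = 1 ∧
      (∀ i j : ιA × ιB, (∑ e : Fin dE, ρ (i, e) (j, e)) = φAB i j) ∧
      x = (1/2) * (vnEntropy (extRedAE ρ) + vnEntropy (extRedBE ρ)
            - vnEntropy ρ - vnEntropy (extRedE ρ)) }



/-- entropy summand -/
noncomputable def eta (x : ℝ) : ℝ := -(x * Real.logb 2 x)

lemma vnEntropy_eq_roots {n : Type} [Fintype n] [DecidableEq n] {M : Matrix n n ℂ}
    (h : M.IsHermitian) :
    vnEntropy M = (M.charpoly.roots.map (fun z : ℂ => eta z.re)).sum := by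
  rw [h.roots_charpoly_eq_eigenvalues, vnEntropy, dif_pos h, Multiset.map_map]
  simp [eta]

lemma eigen_decomp {n : Type} [Fintype n] [DecidableEq n] {M : Matrix n n ℂ}
    (h : M.IsHermitian) : ∃ U : Matrix n n ℂ, Uᴴ * U = 1 ∧ U * Uᴴ = 1 ∧
      M = U * diagonal (fun i => (h.eigenvalues i : ℂ)) * Uᴴ := by
  refine ⟨h.eigenvectorUnitary, ?_, ?_, ?_⟩
  · have := Unitary.coe_star_mul_self h.eigenvectorUnitary
    simpa [star_eq_conjTranspose] using this
  · have := Unitary.coe_mul_star_self h.eigenvectorUnitary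
    simpa [star_eq_conjTranspose] using this
  · have := h.spectral_theorem
    rw [Unitary.conjStarAlgAut_apply] at this
    simpa [star_eq_conjTranspose, Function.comp_def] using this

lemma vnEntropy_of_diag {n : Type} [Fintype n] [DecidableEq n] (U : Matrix n n ℂ) (p : n → ℝ)
    (hU : Uᴴ * U = 1) :
    vnEntropy (U * diagonal (fun i => (p i : ℂ)) * Uᴴ) = ∑ i, eta (p i) := by
  have h : (U * diagonal (fun i => (p i : ℂ)) * Uᴴ).IsHermitian := by
    apply isHermitian_mul_mul_conjTranspose
    rw [IsHermitian, diagonal_conjTranspose]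
    congr 1; ext i; simp
  rw [vnEntropy_eq_roots h, charpoly_mul_comm, ← mul_assoc, hU, one_mul, charpoly_diagonal,
    Polynomial.roots_prod _ _ (by simp [Finset.prod_ne_zero_iff, Polynomial.X_sub_C_ne_zero])]
  simp

/-- Gram form of reduced density -/
noncomputable def rd {S T : Type} [Fintype T] (f : S → T → ℂ) : Matrix S S ℂ :=
  Matrix.of fun s s' => ∑ t, f s t * star (f s' t)

/-- entropy of the `S` part of the vector `f` -/
noncomputable def HH {S T : Type} [Fintype S] [DecidableEq S] [Fintype T] (f : S → T → ℂ) : ℝ :=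
  vnEntropy (rd f)

lemma rd_eq {S T : Type} [Fintype T] (f : S → T → ℂ) :
    rd f = Matrix.of f * (Matrix.of f)ᴴ := by
  ext s s'; simp [rd, Matrix.mul_apply]

lemma rd_psd {S T : Type} [Fintype S] [Fintype T] (f : S → T → ℂ) : (rd f).PosSemidef := by
  rw [rd_eq]; exact posSemidef_self_mul_conjTranspose _

lemma charpoly_roots_aux {S T : Type} [Fintype S] [DecidableEq S] [Fintype T] [DecidableEq T]
    (A : Matrix S T ℂ) (B : Matrix T S ℂ) (g : ℂ → ℝ) (hg : g 0 = 0) :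
    ((A * B).charpoly.roots.map g).sum = ((B * A).charpoly.roots.map g).sum := by
  have h := charpoly_mul_comm' A B
  have h2 := congrArg (fun p : Polynomial ℂ => (p.roots.map g).sum) h
  rw [Polynomial.roots_mul, Polynomial.roots_mul] at h2
  · simpa [hg, Multiset.map_nsmul, Multiset.sum_nsmul] using h2
  · exact mul_ne_zero (pow_ne_zero _ Polynomial.X_ne_zero) (charpoly_monic _).ne_zero
  · exact mul_ne_zero (pow_ne_zero _ Polynomial.X_ne_zero) (charpoly_monic _).ne_zero

lemma HH_swap {S T : Type} [Fintype S] [DecidableEq S] [Fintype T] [DecidableEq T]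
    (f : S → T → ℂ) : HH f = HH (fun t s => f s t) := by
  have h1 : rd (fun t s => f s t) = ((Matrix.of f)ᴴ * Matrix.of f)ᵀ := by
    ext s s'; simp [rd, Matrix.mul_apply, mul_comm]
  rw [HH, HH, vnEntropy_eq_roots (rd_psd f).1, vnEntropy_eq_roots (rd_psd _).1, h1, rd_eq,
    charpoly_transpose]
  exact charpoly_roots_aux _ _ _ (by simp [eta])

lemma HH_reindex {S T S' T' : Type} [Fintype S] [DecidableEq S] [Fintype T]
    [Fintype S'] [DecidableEq S'] [Fintype T']
    (f : S → T → ℂ) (g : S' → T' → ℂ) (e : S ≃ S') (e' : T ≃ T')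
    (h : ∀ s t, f s t = g (e s) (e' t)) : HH f = HH g := by
  have h1 : rd g = Matrix.reindex e e (rd f) := by
    ext s s'
    simp only [rd, of_apply, reindex_apply, submatrix_apply, h, Equiv.apply_symm_apply]
    exact (e'.sum_comp (fun t => g s t * star (g s' t))).symm
  rw [HH, HH, vnEntropy_eq_roots (rd_psd f).1, vnEntropy_eq_roots (rd_psd _).1, h1,
    charpoly_reindex]

lemma isom_sum {X Y : Type} [Fintype X] [Fintype Y] [DecidableEq Y] {V : Matrix X Y ℂ}
    (hV : Vᴴ * V = 1) (a b : Y → ℂ) :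
    ∑ x, (∑ y, V x y * a y) * star (∑ y, V x y * b y) = ∑ y, a y * star (b y) := by
  have h1 : ∀ b : Y → ℂ, (fun x => ∑ y, V x y * b y) = V *ᵥ b := by
    intro b; ext x; rfl
  have h2 : ∑ x, (∑ y, V x y * a y) * star (∑ y, V x y * b y)
      = star (V *ᵥ b) ⬝ᵥ (V *ᵥ a) := by
    rw [← h1, ← h1]; simp [dotProduct, mul_comm]
  rw [h2, star_mulVec, ← dotProduct_mulVec, mulVec_mulVec, hV, one_mulVec]
  simp [dotProduct, mul_comm]

lemma HH_iso_right {S X Y T : Type} [Fintype S] [DecidableEq S] [Fintype X] [Fintype Y]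
    [DecidableEq Y] [Fintype T] {V : Matrix X Y ℂ} (hV : Vᴴ * V = 1) (f : S → Y × T → ℂ) :
    HH (fun s (q : X × T) => ∑ y, V q.1 y * f s (y, q.2)) = HH f := by
  unfold HH; congr 1
  ext s s'
  simp only [rd, of_apply, Fintype.sum_prod_type_right]
  exact Finset.sum_congr rfl fun t _ => isom_sum hV _ _

lemma HH_iso_left {S X Y T : Type} [Fintype S] [DecidableEq S] [Fintype X] [DecidableEq X]
    [Fintype Y] [DecidableEq Y] [Fintype T] [DecidableEq T]
    {V : Matrix X Y ℂ} (hV : Vᴴ * V = 1) (f : Y × S → T → ℂ) :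
    HH (fun (q : X × S) t => ∑ y, V q.1 y * f (y, q.2) t) = HH f := by
  rw [HH_swap, HH_swap f]
  exact HH_iso_right hV (fun t s => f s t)

lemma rd_trace {S T : Type} [Fintype S] [Fintype T] (f : S → T → ℂ) :
    (rd f).trace = ∑ s, ∑ t, f s t * star (f s t) := by
  simp [Matrix.trace, rd]

lemma gibbs {S : Type} [Fintype S] (p q : S → ℝ) (hp : ∀ i, 0 ≤ p i)
    (hq : ∀ i, 0 < q i) (hpq : ∑ i, q i ≤ ∑ i, p i) :
    ∑ i, eta (p i) ≤ ∑ i, -(p i * Real.logb 2 (q i)) := by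
  have hl : 0 < Real.log 2 := Real.log_pos (by norm_num)
  have key : ∀ i, eta (p i) + p i * Real.logb 2 (q i) ≤ (q i - p i) / Real.log 2 := by
    intro i
    rcases (hp i).eq_or_lt with h | h
    · simp [eta, ← h, Real.logb]; exact div_nonneg (hq i).le hl.le
    · have := Real.log_le_sub_one_of_pos (div_pos (hq i) h)
      rw [Real.log_div (hq i).ne' h.ne'] at this
      have h3 := mul_le_mul_of_nonneg_left this h.le
      have h4 : p i * (q i / p i - 1) = q i - p i := by field_simp
      rw [h4] at h3
      rw [eta, Real.logb, Real.logb, le_div_iff₀ hl]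
      field_simp
      linarith
  have := Finset.sum_le_sum (fun i (_ : i ∈ Finset.univ) => key i)
  rw [Finset.sum_add_distrib, ← Finset.sum_div, Finset.sum_sub_distrib] at this
  have h5 : (∑ i, q i - ∑ i, p i) / Real.log 2 ≤ 0 :=
    div_nonpos_of_nonpos_of_nonneg (by linarith) hl.le
  rw [Finset.sum_neg_distrib]; linarith

lemma HH_eq_sum {S T : Type} [Fintype S] [DecidableEq S] [Fintype T] (f : S → T → ℂ) :
    HH f = ∑ i, eta ((rd_psd f).1.eigenvalues i) := by
  rw [HH, vnEntropy, dif_pos (rd_psd f).1]; rfl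

lemma eig_sum {S T : Type} [Fintype S] [DecidableEq S] [Fintype T] (f : S → T → ℂ)
    (h : ∑ s, ∑ t, f s t * star (f s t) = 1) : ∑ i, (rd_psd f).1.eigenvalues i = 1 := by
  have := (rd_psd f).1.trace_eq_sum_eigenvalues
  rw [rd_trace, h] at this
  have h2 : ((∑ i, (rd_psd f).1.eigenvalues i : ℝ) : ℂ) = 1 := by push_cast; exact this.symm
  exact_mod_cast h2

lemma HH_le_log {S T : Type} [Fintype S] [DecidableEq S] [Fintype T] (f : S → T → ℂ)
    (h : ∑ s, ∑ t, f s t * star (f s t) = 1) : HH f ≤ Real.logb 2 (Fintype.card S) := by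
  have hs := eig_sum f h
  have hne : Nonempty S := by
    by_contra hc
    rw [not_nonempty_iff] at hc
    simp at hs
  have hc : (0:ℝ) < Fintype.card S := by exact_mod_cast Fintype.card_pos
  rw [HH_eq_sum]
  refine (gibbs _ (fun _ => (Fintype.card S : ℝ)⁻¹) (rd_psd f).eigenvalues_nonneg
    (fun _ => by positivity) ?_).trans ?_
  · rw [hs]; simp
  · simp only [Real.logb_inv, mul_neg, neg_neg]
    rw [← Finset.sum_mul, hs, one_mul]

lemma HH_fano {S T : Type} [Fintype S] [DecidableEq S] [Fintype T] (f : S → T → ℂ)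
    (h : ∑ s, ∑ t, f s t * star (f s t) = 1) (ψ : S → ℂ) (hψ : star ψ ⬝ᵥ ψ = 1) (ε : ℝ)
    (hF : 1 - ε ≤ (star ψ ⬝ᵥ (rd f *ᵥ ψ)).re) :
    HH f ≤ 1 + ε * Real.logb 2 (Fintype.card S) := by
  have hs := eig_sum f h
  have hne : Nonempty S := by
    by_contra hc
    rw [not_nonempty_iff] at hc
    simp at hs
  have hc : (1:ℝ) ≤ Fintype.card S := by exact_mod_cast Fintype.card_pos
  obtain ⟨U, hU1, hU2, hU3⟩ := eigen_decomp (rd_psd f).1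
  set p := (rd_psd f).1.eigenvalues with hp
  have hp0 : ∀ i, 0 ≤ p i := (rd_psd f).eigenvalues_nonneg
  set c := Uᴴ *ᵥ ψ with hcdef
  have e1 : star ψ ⬝ᵥ (rd f *ᵥ ψ) = ∑ i, ((p i * ‖c i‖^2 : ℝ) : ℂ) := by
    rw [hU3, ← mulVec_mulVec, ← mulVec_mulVec, dotProduct_mulVec, ← hcdef]
    have : star ψ ᵥ* U = star c := by rw [hcdef, star_mulVec, conjTranspose_conjTranspose]
    rw [this]
    simp only [dotProduct, mulVec_diagonal, Pi.star_apply]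
    refine Finset.sum_congr rfl fun i _ => ?_
    have := Complex.conj_mul' (c i)
    simp only [RCLike.star_def]
    push_cast
    rw [← this]; ring
  have e2 : star ψ ⬝ᵥ ψ = ∑ i, ((‖c i‖^2 : ℝ) : ℂ) := by
    have : star c ⬝ᵥ c = star ψ ⬝ᵥ ψ := by
      rw [hcdef, star_mulVec, conjTranspose_conjTranspose, ← dotProduct_mulVec, mulVec_mulVec, hU2,
        one_mulVec]
    rw [← this]
    simp only [dotProduct, Pi.star_apply]
    refine Finset.sum_congr rfl fun i _ => ?_
    have := Complex.conj_mul' (c i)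
    simp only [RCLike.star_def]
    push_cast
    rw [← this]
  have e3 : ∑ i, ‖c i‖^2 = 1 := by
    rw [hψ] at e2; exact_mod_cast e2.symm
  rw [e1] at hF
  have hF' : 1 - ε ≤ ∑ i, p i * ‖c i‖^2 := by
    rw [← Complex.ofReal_sum, Complex.ofReal_re] at hF; exact hF
  obtain ⟨i0, hi0⟩ : ∃ i, 1 - ε ≤ p i := by
    by_contra hcon
    push Not at hcon
    obtain ⟨m, -, hm⟩ := Finset.exists_max_image Finset.univ p Finset.univ_nonempty
    have : ∑ i, p i * ‖c i‖^2 ≤ ∑ i, p m * ‖c i‖^2 :=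
      Finset.sum_le_sum fun i hi => mul_le_mul_of_nonneg_right (hm i hi) (by positivity)
    rw [← Finset.mul_sum, e3, mul_one] at this
    linarith [hcon m]
  rw [HH_eq_sum]
  have hd0 : (0:ℝ) < Fintype.card S := by linarith
  refine (gibbs p (fun i => if i = i0 then 1/2 else 1/(2*Fintype.card S)) hp0
    (fun i => by split_ifs <;> positivity) ?_).trans ?_
  · rw [hs]
    calc _ ≤ ∑ i, ((if i = i0 then (1/2:ℝ) else 0) + 1/(2*Fintype.card S)) := by
          refine Finset.sum_le_sum fun i _ => ?_
          split_ifs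
          · linarith [show (0:ℝ) ≤ 1/(2*Fintype.card S) by positivity]
          · linarith
      _ = 1 := by
          rw [Finset.sum_add_distrib]; simp; field_simp; norm_num
  · have l1 : Real.logb 2 (1/2) = -1 := by
      rw [one_div, Real.logb_inv, Real.logb_self_eq_one (by norm_num)]
    have l2 : Real.logb 2 (1/(2*Fintype.card S)) = -(1 + Real.logb 2 (Fintype.card S)) := by
      rw [one_div, Real.logb_inv, Real.logb_mul (by norm_num) hd0.ne',
        Real.logb_self_eq_one (by norm_num)]
    have : ∀ i, -(p i * Real.logb 2 (if i = i0 then 1/2 else 1/(2*Fintype.card S)))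
        = p i * (1 + Real.logb 2 (Fintype.card S))
          - (if i = i0 then p i * Real.logb 2 (Fintype.card S) else 0) := by
      intro i
      split_ifs
      · rw [l1]; ring
      · rw [l2]; ring
    rw [Finset.sum_congr rfl fun i _ => this i, Finset.sum_sub_distrib, ← Finset.sum_mul, hs]
    simp only [Finset.sum_ite_eq', Finset.mem_univ, if_true]
    have : 0 ≤ Real.logb 2 (Fintype.card S : ℝ) := Real.logb_nonneg (by norm_num) hc
    nlinarith


noncomputable def ff {I J : Type} [Fintype I] [Fintype J] (p : I → ℝ) (q : J → ℝ)
    (w : I → J → ℝ) (t : ℝ) : ℝ := ∑ i, ∑ j, w i j * (p i ^ 2 / (q j + t * p i))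

noncomputable def gg {I J : Type} [Fintype I] [Fintype J] (p : I → ℝ) (q : J → ℝ)
    (w : I → J → ℝ) (t : ℝ) : ℝ := ∑ i, ∑ j, w i j * p i * Real.log (q j + t * p i)

lemma gg_deriv {I J : Type} [Fintype I] [Fintype J] (p : I → ℝ) (q : J → ℝ)
    (w : I → J → ℝ) (hp : ∀ i, 0 ≤ p i) (hq : ∀ j, 0 ≤ q j)
    (hs : ∀ i j, q j = 0 → p i * w i j = 0) (t : ℝ) (ht : 0 ≤ t) :
    HasDerivAt (gg p q w) (ff p q w t) t := by
  unfold gg ff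
  refine HasDerivAt.fun_sum fun i _ => HasDerivAt.fun_sum fun j _ => ?_
  by_cases h : p i * w i j = 0
  · have h1 : w i j * (p i ^ 2 / (q j + t * p i)) = 0 := by
      rw [show w i j * (p i ^ 2 / (q j + t * p i)) = (p i * w i j) * (p i / (q j + t * p i)) by ring,
        h, zero_mul]
    have h2 : (fun t : ℝ => w i j * p i * Real.log (q j + t * p i)) = fun _ => 0 := by
      ext t; rw [mul_comm (w i j), h, zero_mul]
    rw [h1, h2]; exact hasDerivAt_const _ _
  · have hq0 : 0 < q j := (hq j).lt_of_ne fun h' => h (hs i j h'.symm)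
    have hpos : 0 < q j + t * p i := by have := mul_nonneg ht (hp i); linarith
    have h3 : HasDerivAt (fun t : ℝ => q j + t * p i) (p i) t := by
      simpa using ((hasDerivAt_id t).mul_const (p i)).const_add (q j)
    have := (h3.log hpos.ne').const_mul (w i j * p i)
    exact this.congr_deriv (by ring)

lemma gg_lim {I J : Type} [Fintype I] [Fintype J] (p : I → ℝ) (q : J → ℝ)
    (w : I → J → ℝ) (hp : ∀ i, 0 ≤ p i) (hq : ∀ j, 0 ≤ q j)
    (hw : ∀ i, ∑ j, w i j = 1) :
    Filter.Tendsto (fun t => gg p q w t - (∑ i, p i) * Real.log t) Filter.atTop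
      (nhds (∑ i, p i * Real.log (p i))) := by
  have h1 : ∀ t : ℝ, 0 < t → gg p q w t - (∑ i, p i) * Real.log t
      = ∑ i, ∑ j, w i j * p i * Real.log (q j * t⁻¹ + p i) := by
    intro t ht
    have : (∑ i, p i) * Real.log t = ∑ i, ∑ j, w i j * p i * Real.log t := by
      rw [Finset.sum_mul]
      refine Finset.sum_congr rfl fun i _ => ?_
      rw [← Finset.sum_mul, ← Finset.sum_mul, hw, one_mul]
    rw [this, gg, ← Finset.sum_sub_distrib]
    refine Finset.sum_congr rfl fun i _ => ?_
    rw [← Finset.sum_sub_distrib]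
    refine Finset.sum_congr rfl fun j _ => ?_
    rcases (hp i).eq_or_lt with h | h
    · simp [← h]
    · have : q j + t * p i = t * (q j * t⁻¹ + p i) := by field_simp
      have h5 : 0 ≤ q j * t⁻¹ := mul_nonneg (hq j) (by positivity)
      rw [this, Real.log_mul ht.ne' (by linarith)]; ring
  have h2 : ∑ i, p i * Real.log (p i) = ∑ i, ∑ j, w i j * p i * Real.log (q j * 0 + p i) := by
    refine Finset.sum_congr rfl fun i _ => ?_
    simp only [mul_zero, zero_add]
    rw [← Finset.sum_mul, ← Finset.sum_mul, hw, one_mul]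
  rw [h2]
  refine Filter.Tendsto.congr' (f₁ := fun t : ℝ => ∑ i, ∑ j, w i j * p i * Real.log (q j * t⁻¹ + p i)) ?_ ?_
  · filter_upwards [Filter.eventually_gt_atTop 0] with t ht using (h1 t ht).symm
  refine tendsto_finsetSum _ fun i _ => tendsto_finsetSum _ fun j _ => ?_
  rcases (hp i).eq_or_lt with h | h
  · simp [← h]
  · refine Filter.Tendsto.const_mul _ ?_
    refine Filter.Tendsto.log ?_ (by simpa using h.ne')
    exact (tendsto_inv_atTop_zero.const_mul _).add_const _

lemma rel_mono_real {I J I' J' : Type} [Fintype I] [Fintype J] [Fintype I'] [Fintype J']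
    (p : I → ℝ) (q : J → ℝ) (w : I → J → ℝ) (hp : ∀ i, 0 ≤ p i) (hq : ∀ j, 0 ≤ q j)
    (hw : ∀ i, ∑ j, w i j = 1) (hs : ∀ i j, q j = 0 → p i * w i j = 0)
    (p' : I' → ℝ) (q' : J' → ℝ) (w' : I' → J' → ℝ) (hp' : ∀ i, 0 ≤ p' i) (hq' : ∀ j, 0 ≤ q' j)
    (hw' : ∀ i, ∑ j, w' i j = 1) (hs' : ∀ i j, q' j = 0 → p' i * w' i j = 0)
    (htr : ∑ i, p i = ∑ i, p' i)
    (hf : ∀ t, 0 < t → ff p' q' w' t ≤ ff p q w t) :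
    ∑ i, p' i * Real.log (p' i) - ∑ i, ∑ j, w' i j * p' i * Real.log (q' j) ≤
    ∑ i, p i * Real.log (p i) - ∑ i, ∑ j, w i j * p i * Real.log (q j) := by
  have hd : ∀ t, 0 ≤ t → HasDerivAt (fun t => gg p q w t - gg p' q' w' t)
      (ff p q w t - ff p' q' w' t) t := fun t ht =>
    (gg_deriv p q w hp hq hs t ht).sub (gg_deriv p' q' w' hp' hq' hs' t ht)
  have hm : MonotoneOn (fun t => gg p q w t - gg p' q' w' t) (Set.Ici 0) := by
    refine monotoneOn_of_deriv_nonneg (convex_Ici 0)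
      (fun t ht => (hd t ht).continuousAt.continuousWithinAt) ?_ ?_
    · intro t ht
      rw [interior_Ici] at ht
      exact (hd t (le_of_lt ht)).differentiableAt.differentiableWithinAt
    · intro t ht
      rw [interior_Ici] at ht
      rw [(hd t (le_of_lt ht)).deriv]
      linarith [hf t ht]
  have hl := (gg_lim p q w hp hq hw).sub (gg_lim p' q' w' hp' hq' hw')
  have h0 : ∀ᶠ t in Filter.atTop, gg p q w 0 - gg p' q' w' 0 ≤
      (gg p q w t - (∑ i, p i) * Real.log t) - (gg p' q' w' t - (∑ i, p' i) * Real.log t) := by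
    filter_upwards [Filter.eventually_ge_atTop 0] with t ht
    have := hm (Set.mem_Ici.2 le_rfl) (Set.mem_Ici.2 ht) ht
    simp only at this
    rw [htr]; linarith
  have := ge_of_tendsto hl h0
  simp only [gg, zero_mul, add_zero] at this
  linarith

noncomputable def vv {S : Type} [Fintype S] (ρ σ : Matrix S S ℂ) (t : ℝ) (Y : Matrix S S ℂ) : ℝ :=
  2 * (ρ * Y).trace.re - (σ * (Y * Yᴴ)).trace.re - t * (ρ * (Yᴴ * Y)).trace.re

lemma trace_diag_conj {S : Type} [Fintype S] [DecidableEq S] (U X : Matrix S S ℂ) (p : S → ℝ) :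
    (U * diagonal (fun i => (p i : ℂ)) * Uᴴ * X).trace.re = ∑ i, p i * ((Uᴴ * X * U) i i).re := by
  rw [Matrix.mul_assoc, Matrix.trace_mul_comm, ← Matrix.mul_assoc, Matrix.trace_mul_comm,
    Matrix.trace]
  simp [diagonal_mul]

lemma vv_eq {S : Type} [Fintype S] [DecidableEq S] (U V : Matrix S S ℂ) (p q : S → ℝ)
    (hU : U * Uᴴ = 1) (hV : V * Vᴴ = 1) (t : ℝ) (Y : Matrix S S ℂ) :
    vv (U * diagonal (fun i => (p i : ℂ)) * Uᴴ) (V * diagonal (fun i => (q i : ℂ)) * Vᴴ) t Y =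
    ∑ i, ∑ j, (2 * p i * ((Uᴴ * V) i j * (Vᴴ * Y * U) j i).re
      - (q j + t * p i) * ‖(Vᴴ * Y * U) j i‖ ^ 2) := by
  have a1 : Uᴴ * Y * U = (Uᴴ * V) * (Vᴴ * Y * U) := by
    calc _ = Uᴴ * (1 : Matrix S S ℂ) * Y * U := by rw [Matrix.mul_one]
      _ = _ := by rw [← hV]; simp only [Matrix.mul_assoc]
  have a2 : Vᴴ * (Y * Yᴴ) * V = (Vᴴ * Y * U) * (Vᴴ * Y * U)ᴴ := by
    calc _ = Vᴴ * (Y * (1 : Matrix S S ℂ) * Yᴴ) * V := by rw [Matrix.mul_one]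
      _ = _ := by
        rw [← hU]; simp only [Matrix.mul_assoc, conjTranspose_mul, conjTranspose_conjTranspose]
  have a3 : Uᴴ * (Yᴴ * Y) * U = (Vᴴ * Y * U)ᴴ * (Vᴴ * Y * U) := by
    calc _ = Uᴴ * (Yᴴ * (1 : Matrix S S ℂ) * Y) * U := by rw [Matrix.mul_one]
      _ = _ := by
        rw [← hV]; simp only [Matrix.mul_assoc, conjTranspose_mul, conjTranspose_conjTranspose]
  rw [vv, trace_diag_conj, trace_diag_conj, trace_diag_conj, a1, a2, a3]
  generalize Vᴴ * Y * U = Z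
  generalize Uᴴ * V = c
  have b2 : ∀ j, ((Z * Zᴴ) j j).re = ∑ i, ‖Z j i‖ ^ 2 := by
    intro j
    rw [Matrix.mul_apply, Complex.re_sum]
    refine Finset.sum_congr rfl fun i _ => ?_
    rw [conjTranspose_apply, RCLike.star_def, Complex.mul_conj']
    norm_cast
  have b3 : ∀ i, ((Zᴴ * Z) i i).re = ∑ j, ‖Z j i‖ ^ 2 := by
    intro i
    rw [Matrix.mul_apply, Complex.re_sum]
    refine Finset.sum_congr rfl fun j _ => ?_
    rw [conjTranspose_apply, RCLike.star_def, Complex.conj_mul']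
    norm_cast
  simp only [b2, b3]
  simp only [Matrix.mul_apply, Complex.re_sum, Finset.mul_sum]
  rw [Finset.sum_comm (f := fun j i => q j * ‖Z j i‖ ^ 2)]
  simp only [← Finset.sum_sub_distrib]
  refine Finset.sum_congr rfl fun i _ => Finset.sum_congr rfl fun j _ => ?_
  ring

lemma vv_le {S : Type} [Fintype S] [DecidableEq S] (U V : Matrix S S ℂ) (p q : S → ℝ)
    (hU : U * Uᴴ = 1) (hV : V * Vᴴ = 1) (hp : ∀ i, 0 ≤ p i) (hq : ∀ i, 0 ≤ q i)
    (t : ℝ) (ht : 0 < t) (Y : Matrix S S ℂ) :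
    vv (U * diagonal (fun i => (p i : ℂ)) * Uᴴ) (V * diagonal (fun i => (q i : ℂ)) * Vᴴ) t Y ≤
    ff p q (fun i j => ‖(Uᴴ * V) i j‖ ^ 2) t := by
  rw [vv_eq U V p q hU hV, ff]
  refine Finset.sum_le_sum fun i _ => Finset.sum_le_sum fun j _ => ?_
  generalize (Vᴴ * Y * U) j i = z
  generalize (Uᴴ * V) i j = c
  have h1 : (c * z).re ≤ ‖c‖ * ‖z‖ := by
    rw [← norm_mul]; exact Complex.re_le_norm _
  have htp := mul_nonneg ht.le (hp i)
  rcases (add_nonneg (hq j) htp).eq_or_lt with h | h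
  · have : p i = 0 := by
      have h5 : t * p i = 0 := by linarith [hq j]
      exact (mul_eq_zero.1 h5).resolve_left ht.ne'
    rw [← h, this]; simp
  · rw [mul_div_assoc', le_div_iff₀ h]
    have h2 : 2 * p i * (c * z).re ≤ 2 * p i * (‖c‖ * ‖z‖) :=
      mul_le_mul_of_nonneg_left h1 (by linarith [hp i])
    have h3 := mul_le_mul_of_nonneg_right h2 h.le
    nlinarith [sq_nonneg ((q j + t * p i) * ‖z‖ - p i * ‖c‖)]

lemma vv_attain {S : Type} [Fintype S] [DecidableEq S] (U V : Matrix S S ℂ) (p q : S → ℝ)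
    (hU : U * Uᴴ = 1) (hV : V * Vᴴ = 1) (hp : ∀ i, 0 ≤ p i) (hq : ∀ i, 0 ≤ q i)
    (t : ℝ) (ht : 0 < t) : ∃ Y : Matrix S S ℂ,
    vv (U * diagonal (fun i => (p i : ℂ)) * Uᴴ) (V * diagonal (fun i => (q i : ℂ)) * Vᴴ) t Y =
    ff p q (fun i j => ‖(Uᴴ * V) i j‖ ^ 2) t := by
  set Z : Matrix S S ℂ := Matrix.of fun j i =>
    ((p i / (q j + t * p i) : ℝ) : ℂ) * star ((Uᴴ * V) i j) with hZ
  refine ⟨V * Z * Uᴴ, ?_⟩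
  rw [vv_eq U V p q hU hV, ff]
  have h1 : Vᴴ * (V * Z * Uᴴ) * U = Z := by
    have hU' := mul_eq_one_comm.1 hU
    have hV' := mul_eq_one_comm.1 hV
    calc _ = (Vᴴ * V) * Z * (Uᴴ * U) := by simp only [Matrix.mul_assoc]
      _ = Z := by rw [hU', hV']; simp
  rw [h1]
  refine Finset.sum_congr rfl fun i _ => Finset.sum_congr rfl fun j _ => ?_
  rw [hZ, of_apply]
  generalize (Uᴴ * V) i j = c
  have e1 : (c * (((p i / (q j + t * p i) : ℝ) : ℂ) * star c)).re
      = p i / (q j + t * p i) * ‖c‖ ^ 2 := by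
    rw [mul_left_comm, RCLike.star_def, Complex.mul_conj']
    norm_cast
  rw [e1, norm_mul, norm_star, Complex.norm_real, mul_pow, Real.norm_eq_abs, sq_abs]
  have htp := mul_nonneg ht.le (hp i)
  rcases (add_nonneg (hq j) htp).eq_or_lt with h | h
  · simp [← h]
  · field_simp; ring

lemma w_sum {S : Type} [Fintype S] [DecidableEq S] (U V : Matrix S S ℂ)
    (hU : Uᴴ * U = 1) (hV : V * Vᴴ = 1) (i : S) : ∑ j, ‖(Uᴴ * V) i j‖ ^ 2 = 1 := by
  have h : (Uᴴ * V) * (Uᴴ * V)ᴴ = 1 := by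
    rw [conjTranspose_mul, conjTranspose_conjTranspose, Matrix.mul_assoc, ← Matrix.mul_assoc V, hV,
      Matrix.one_mul, hU]
  have h2 := congrArg (fun M : Matrix S S ℂ => M i i) h
  simp only [Matrix.mul_apply (M := Uᴴ * V), conjTranspose_apply, RCLike.star_def,
    Complex.mul_conj', one_apply_eq] at h2
  exact_mod_cast h2

lemma w_psum {S : Type} [Fintype S] [DecidableEq S] (U V : Matrix S S ℂ) (p : S → ℝ) (j : S) :
    (((∑ i, ‖(Uᴴ * V) i j‖ ^ 2 * p i : ℝ)) : ℂ) =
      (Vᴴ * (U * diagonal (fun i => (p i : ℂ)) * Uᴴ) * V) j j := by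
  have : Vᴴ * (U * diagonal (fun i => (p i : ℂ)) * Uᴴ) * V =
    (Uᴴ * V)ᴴ * (diagonal (fun i => (p i : ℂ)) * (Uᴴ * V)) := by
    simp only [conjTranspose_mul, conjTranspose_conjTranspose, Matrix.mul_assoc]
  rw [this, Matrix.mul_apply]
  push_cast
  refine Finset.sum_congr rfl fun i _ => ?_
  rw [diagonal_mul, conjTranspose_apply, RCLike.star_def, ← Complex.conj_mul']
  ring

/-- monotonicity of relative entropy -/
lemma rel_mono {S S' : Type} [Fintype S] [DecidableEq S] [Fintype S'] [DecidableEq S']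
    (U V : Matrix S S ℂ) (p q : S → ℝ) (hU : Uᴴ * U = 1) (hV : V * Vᴴ = 1)
    (hp : ∀ i, 0 ≤ p i) (hq : ∀ i, 0 ≤ q i)
    (U' V' : Matrix S' S' ℂ) (p' q' : S' → ℝ) (hU' : U'ᴴ * U' = 1) (hV' : V' * V'ᴴ = 1)
    (hp' : ∀ i, 0 ≤ p' i) (hq' : ∀ i, 0 ≤ q' i)
    (r : S → ℝ) (r' : S' → ℝ)
    (hr : ∀ j, ((r j : ℝ) : ℂ) = (Vᴴ * (U * diagonal (fun i => (p i : ℂ)) * Uᴴ) * V) j j)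
    (hr' : ∀ j, ((r' j : ℝ) : ℂ) = (V'ᴴ * (U' * diagonal (fun i => (p' i : ℂ)) * U'ᴴ) * V') j j)
    (hs : ∀ j, q j = 0 → r j = 0) (hs' : ∀ j, q' j = 0 → r' j = 0)
    (htr : ∑ i, p i = ∑ i, p' i)
    (hY : ∀ t (Y' : Matrix S' S' ℂ), ∃ Y : Matrix S S ℂ,
      vv (U * diagonal (fun i => (p i : ℂ)) * Uᴴ) (V * diagonal (fun i => (q i : ℂ)) * Vᴴ) t Y =
      vv (U' * diagonal (fun i => (p' i : ℂ)) * U'ᴴ) (V' * diagonal (fun i => (q' i : ℂ)) * V'ᴴ)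
        t Y') :
    ∑ i, p' i * Real.log (p' i) - ∑ j, r' j * Real.log (q' j) ≤
    ∑ i, p i * Real.log (p i) - ∑ j, r j * Real.log (q j) := by
  have k : ∀ j, r j = ∑ i, ‖(Uᴴ * V) i j‖ ^ 2 * p i := fun j => by
    have := (hr j).trans (w_psum U V p j).symm
    exact_mod_cast this
  have k' : ∀ j, r' j = ∑ i, ‖(U'ᴴ * V') i j‖ ^ 2 * p' i := fun j => by
    have := (hr' j).trans (w_psum U' V' p' j).symm
    exact_mod_cast this
  have main := rel_mono_real p q (fun i j => ‖(Uᴴ * V) i j‖ ^ 2) hp hq (w_sum U V hU hV) ?_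
    p' q' (fun i j => ‖(U'ᴴ * V') i j‖ ^ 2) hp' hq' (w_sum U' V' hU' hV') ?_ htr ?_
  · rw [Finset.sum_comm (γ := S), Finset.sum_comm (γ := S')] at main
    simp only [← Finset.sum_mul, ← k, ← k'] at main
    exact main
  · intro i j hj
    have h := hs j hj
    rw [k, Finset.sum_eq_zero_iff_of_nonneg (fun i _ => mul_nonneg (by positivity) (hp i))] at h
    rw [mul_comm]; exact h i (Finset.mem_univ i)
  · intro i j hj
    have h := hs' j hj
    rw [k', Finset.sum_eq_zero_iff_of_nonneg (fun i _ => mul_nonneg (by positivity) (hp' i))] at h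
    rw [mul_comm]; exact h i (Finset.mem_univ i)
  · intro t ht
    obtain ⟨Y', h'⟩ := vv_attain U' V' p' q' (mul_eq_one_comm.1 hU') hV' hp' hq' t ht
    obtain ⟨Y, h⟩ := hY t Y'
    rw [← h', ← h]
    exact vv_le U V p q (mul_eq_one_comm.1 hU) hV hp hq t ht Y


lemma sum_normSq_eq {D : Type} [Fintype D] (g : D → ℂ) :
    ∑ d, g d * star (g d) = ((∑ d, ‖g d‖ ^ 2 : ℝ) : ℂ) := by
  push_cast
  refine Finset.sum_congr rfl fun d _ => ?_
  rw [RCLike.star_def, Complex.mul_conj']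

open scoped Kronecker in
lemma ssa_side {A X D : Type} [Fintype A] [DecidableEq A] [Fintype X] [DecidableEq X] [Fintype D]
    (f : A × X → D → ℂ) :
    ∃ (V : Matrix (A × X) (A × X) ℂ) (q r : A × X → ℝ),
      V * Vᴴ = 1 ∧ (∀ s, 0 ≤ q s) ∧
      (∀ j, ((r j : ℝ) : ℂ) = (Vᴴ * rd f * V) j j) ∧ (∀ j, q j = 0 → r j = 0) ∧
      V * diagonal (fun i => (q i : ℂ)) * Vᴴ
        = (1 : Matrix A A ℂ) ⊗ₖ rd (fun x (t : A × D) => f (t.1, x) t.2) ∧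
      ∑ j, r j * Real.logb 2 (q j) = - HH (fun x (t : A × D) => f (t.1, x) t.2) := by
  set g : X → A × D → ℂ := fun x t => f (t.1, x) t.2 with hg
  obtain ⟨V0, hV1, hV2, hV3⟩ := eigen_decomp (rd_psd g).1
  rw [HH_eq_sum]
  have hq0 := (rd_psd g).eigenvalues_nonneg
  set q0 := (rd_psd g).1.eigenvalues
  have h1 : ∀ s d, (((1 : Matrix A A ℂ) ⊗ₖ V0)ᴴ * Matrix.of f) s d
      = ∑ y, star (V0 y s.2) * f (s.1, y) d := by
    intro s d
    rw [Matrix.mul_apply, Fintype.sum_prod_type]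
    rw [Finset.sum_eq_single s.1]
    · simp [kroneckerMap_apply]
    · intro b _ hb
      simp [kroneckerMap_apply, one_apply, hb]
    · simp
  have h2 : ∀ x, ∑ a, ∑ d, ‖∑ y, star (V0 y x) * f (a, y) d‖ ^ 2 = q0 x := by
    intro x
    have e1 : V0ᴴ * rd g * V0 = diagonal (fun i => (q0 i : ℂ)) := by
      rw [hV3]
      calc _ = (V0ᴴ * V0) * diagonal (fun i => (q0 i : ℂ)) * (V0ᴴ * V0) := by
            simp only [Matrix.mul_assoc]
        _ = _ := by rw [hV1]; simp
    have e2 : V0ᴴ * rd g * V0 = (V0ᴴ * Matrix.of g) * (V0ᴴ * Matrix.of g)ᴴ := by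
      rw [rd_eq]; simp only [Matrix.mul_assoc, conjTranspose_mul, conjTranspose_conjTranspose]
    have e3 := congrArg (fun M : Matrix X X ℂ => M x x) (e2.symm.trans e1)
    simp only [Matrix.mul_apply (M := V0ᴴ * Matrix.of g), conjTranspose_apply (V0ᴴ * Matrix.of g),
      diagonal_apply_eq] at e3
    rw [sum_normSq_eq] at e3
    have e4 := Complex.ofReal_injective e3
    rw [← e4, Fintype.sum_prod_type]
    refine Finset.sum_congr rfl fun a _ => Finset.sum_congr rfl fun d _ => ?_
    rw [Matrix.mul_apply]
    rfl
  refine ⟨(1 : Matrix A A ℂ) ⊗ₖ V0, fun s => q0 s.2,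
    fun s => ∑ d, ‖∑ y, star (V0 y s.2) * f (s.1, y) d‖ ^ 2, ?_, fun s => hq0 _, ?_, ?_, ?_, ?_⟩
  · rw [conjTranspose_kronecker, ← mul_kronecker_mul, hV2]; simp
  · intro s
    have e2 : ((1 : Matrix A A ℂ) ⊗ₖ V0)ᴴ * rd f * ((1 : Matrix A A ℂ) ⊗ₖ V0) =
        (((1 : Matrix A A ℂ) ⊗ₖ V0)ᴴ * Matrix.of f) * (((1 : Matrix A A ℂ) ⊗ₖ V0)ᴴ * Matrix.of f)ᴴ := by
      rw [rd_eq]; simp only [Matrix.mul_assoc, conjTranspose_mul, conjTranspose_conjTranspose]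
    rw [e2, Matrix.mul_apply]
    refine (sum_normSq_eq fun d => ∑ y, star (V0 y s.2) * f (s.1, y) d).symm.trans ?_
    refine Finset.sum_congr rfl fun d _ => ?_
    rw [conjTranspose_apply, h1]
  · intro s hs
    have := h2 s.2
    rw [show q0 s.2 = 0 from hs, Finset.sum_eq_zero_iff_of_nonneg
      (fun a _ => Finset.sum_nonneg fun d _ => by positivity)] at this
    exact this s.1 (Finset.mem_univ _)
  · have : (diagonal (fun i : A × X => ((q0 i.2 : ℝ) : ℂ))) =
        (1 : Matrix A A ℂ) ⊗ₖ diagonal (fun i => (q0 i : ℂ)) := by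
      rw [← diagonal_one, diagonal_kronecker_diagonal]; simp
    rw [this, conjTranspose_kronecker, ← mul_kronecker_mul, ← mul_kronecker_mul, ← hV3]; simp
  · rw [Fintype.sum_prod_type_right, ← Finset.sum_neg_distrib]
    refine Finset.sum_congr rfl fun x _ => ?_
    simp only []
    rw [← Finset.sum_mul, h2, eta]; ring

open scoped Kronecker in
/-- lift of an operator -/
def lft {A B : Type} (C : Type) [DecidableEq C] (Y : Matrix (A × B) (A × B) ℂ) :
    Matrix (A × (B × C)) (A × (B × C)) ℂ :=
  (Y ⊗ₖ (1 : Matrix C C ℂ)).submatrix (Equiv.prodAssoc A B C).symm (Equiv.prodAssoc A B C).symm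

lemma lft_mul {A B C : Type} [Fintype A] [Fintype B] [Fintype C] [DecidableEq C]
    (Y Z : Matrix (A × B) (A × B) ℂ) : lft C Y * lft C Z = lft C (Y * Z) := by
  unfold lft
  rw [submatrix_mul_equiv, ← mul_kronecker_mul, Matrix.one_mul]

lemma lft_ct {A B C : Type} [DecidableEq C]
    (Y : Matrix (A × B) (A × B) ℂ) : (lft C Y)ᴴ = lft C Yᴴ := by
  unfold lft
  rw [conjTranspose_submatrix, conjTranspose_kronecker, conjTranspose_one]

lemma lft_trace {A B C : Type} [Fintype A] [Fintype B] [Fintype C] [DecidableEq C]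
    (M : Matrix (A × (B × C)) (A × (B × C)) ℂ) (M' Y : Matrix (A × B) (A × B) ℂ)
    (h : ∀ p p', M' p p' = ∑ c, M (p.1, (p.2, c)) (p'.1, (p'.2, c))) :
    (M * lft C Y).trace = (M' * Y).trace := by
  simp only [Matrix.trace, diag_apply, Matrix.mul_apply, h, lft, submatrix_apply,
    kroneckerMap_apply, Fintype.sum_prod_type, Equiv.prodAssoc_symm_apply, one_apply]
  simp only [mul_ite, mul_one, mul_zero, Finset.sum_ite_eq', Finset.mem_univ, if_true,
    Finset.sum_mul]
  refine Finset.sum_congr rfl fun a _ => Finset.sum_congr rfl fun b _ => ?_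
  rw [Finset.sum_comm]
  refine Finset.sum_congr rfl fun a' _ => ?_
  rw [Finset.sum_comm]

lemma HH_neg_log {S T : Type} [Fintype S] [DecidableEq S] [Fintype T] (f : S → T → ℂ) :
    ∑ i, (rd_psd f).1.eigenvalues i * Real.log ((rd_psd f).1.eigenvalues i)
      = - HH f * Real.log 2 := by
  rw [HH_eq_sum, ← Finset.sum_neg_distrib, Finset.sum_mul]
  refine Finset.sum_congr rfl fun i _ => ?_
  have hl : Real.log 2 ≠ 0 := (Real.log_pos (by norm_num)).ne'
  rw [eta, Real.logb]; field_simp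

open scoped Kronecker in
lemma HH_ssa {A B C D : Type} [Fintype A] [DecidableEq A] [Fintype B] [DecidableEq B]
    [Fintype C] [DecidableEq C] [Fintype D] (v : A → B → C → D → ℂ) :
    HH (fun (s : A × (B × C)) (d : D) => v s.1 s.2.1 s.2.2 d)
      + HH (fun (b : B) (t : A × (C × D)) => v t.1 b t.2.1 t.2.2)
    ≤ HH (fun (s : A × B) (t : C × D) => v s.1 s.2 t.1 t.2)
      + HH (fun (s : B × C) (t : A × D) => v t.1 s.1 s.2 t.2) := by
  set f : A × (B × C) → D → ℂ := fun s d => v s.1 s.2.1 s.2.2 d with hf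
  set f' : A × B → C × D → ℂ := fun s t => v s.1 s.2 t.1 t.2 with hf'
  obtain ⟨V, q, r, hV, hq, hr, hs, hσ, hsum⟩ := ssa_side f
  obtain ⟨V', q', r', hV', hq', hr', hs', hσ', hsum'⟩ := ssa_side f'
  obtain ⟨U, hU, -, hρ⟩ := eigen_decomp (rd_psd f).1
  obtain ⟨U', hU', -, hρ'⟩ := eigen_decomp (rd_psd f').1
  have hn := HH_neg_log f
  have hn' := HH_neg_log f'
  have hpt : ∀ p p', rd f' p p' = ∑ c, rd f (p.1, (p.2, c)) (p'.1, (p'.2, c)) := by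
    intro p p'
    simp [rd, hf, hf', Fintype.sum_prod_type]
  have hpt2 : ∀ p p', ((1 : Matrix A A ℂ) ⊗ₖ rd (fun x (t : A × (C × D)) => f' (t.1, x) t.2)) p p'
      = ∑ c, ((1 : Matrix A A ℂ) ⊗ₖ rd (fun x (t : A × D) => f (t.1, x) t.2))
        (p.1, (p.2, c)) (p'.1, (p'.2, c)) := by
    intro p p'
    simp only [kroneckerMap_apply]
    refine Eq.trans ?_ (Finset.mul_sum Finset.univ
      (fun c => rd (fun x (t : A × D) => f (t.1, x) t.2) (p.2, c) (p'.2, c))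
      ((1 : Matrix A A ℂ) p.1 p'.1))
    refine congrArg (fun z => _ * z) ?_
    simp only [rd, hf, hf', Fintype.sum_prod_type, of_apply]
    rw [Finset.sum_comm]
  have htr : ∑ i, (rd_psd f).1.eigenvalues i = ∑ i, (rd_psd f').1.eigenvalues i := by
    have h1 := (rd_psd f).1.trace_eq_sum_eigenvalues
    have h2 := (rd_psd f').1.trace_eq_sum_eigenvalues
    have h3 : (rd f).trace = (rd f').trace := by
      rw [rd_trace, rd_trace]; simp [hf, hf', Fintype.sum_prod_type]
    rw [h1, h2] at h3
    refine Complex.ofReal_injective ?_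
    push_cast
    exact h3
  have main := rel_mono U V _ q hU hV (rd_psd f).eigenvalues_nonneg hq U' V' _ q' hU' hV'
    (rd_psd f').eigenvalues_nonneg hq' r r' (by rw [← hρ]; exact hr) (by rw [← hρ']; exact hr')
    hs hs' htr ?_
  · have hl : 0 < Real.log 2 := Real.log_pos (by norm_num)
    have a1 : ∑ j, r j * Real.log (q j) = (∑ j, r j * Real.logb 2 (q j)) * Real.log 2 := by
      rw [Finset.sum_mul]; refine Finset.sum_congr rfl fun i _ => ?_
      rw [Real.logb]; field_simp
    have a2 : ∑ j, r' j * Real.log (q' j) = (∑ j, r' j * Real.logb 2 (q' j)) * Real.log 2 := by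
      rw [Finset.sum_mul]; refine Finset.sum_congr rfl fun i _ => ?_
      rw [Real.logb]; field_simp
    rw [hn, hn', a1, a2, hsum, hsum', ← sub_mul, ← sub_mul] at main
    have := le_of_mul_le_mul_right main hl
    have e1 : HH (fun x (t : A × (C × D)) => f' (t.1, x) t.2) =
      HH (fun (b : B) (t : A × (C × D)) => v t.1 b t.2.1 t.2.2) := rfl
    have e2 : HH (fun x (t : A × D) => f (t.1, x) t.2) =
      HH (fun (s : B × C) (t : A × D) => v t.1 s.1 s.2 t.2) := rfl
    rw [e1, e2] at this
    linarith
  · intro t Y'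
    refine ⟨lft C Y', ?_⟩
    rw [hσ, hσ', ← hρ, ← hρ']
    unfold vv
    rw [lft_ct, lft_mul, lft_mul, lft_trace _ _ _ hpt, lft_trace _ _ _ hpt, lft_trace _ _ _ hpt2]


lemma HH_to {S T S' T' : Type} [Fintype S] [DecidableEq S] [Fintype T]
    [Fintype S'] [DecidableEq S'] [Fintype T']
    {f : S → T → ℂ} {g : S' → T' → ℂ} {r : ℝ} (hg : HH g = r) (e : S ≃ S') (e' : T ≃ T')
    (h : ∀ s t, f s t = g (e s) (e' t)) : HH f = r :=
  (HH_reindex f g e e' h).trans hg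

lemma HH_unit {T : Type} [Fintype T] (f : Unit → T → ℂ)
    (h : ∑ s, ∑ t, f s t * star (f s t) = 1) : HH f = 0 := by
  have h1 := eig_sum f h
  rw [HH_eq_sum]
  simp only [Finset.univ_unique, Finset.sum_singleton] at h1 ⊢
  rw [h1]; simp [eta]

lemma L_sa {X Y Z : Type} [Fintype X] [DecidableEq X] [Fintype Y] [DecidableEq Y] [Fintype Z]
    (v : X → Y → Z → ℂ) (hv : ∑ x, ∑ y, ∑ z, v x y z * star (v x y z) = 1) {rxy rx ry : ℝ}
    (hxy : HH (fun (s : X × Y) z => v s.1 s.2 z) = rxy)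
    (hx : HH (fun x (t : Y × Z) => v x t.1 t.2) = rx)
    (hy : HH (fun y (t : X × Z) => v t.1 y t.2) = ry) : rxy ≤ rx + ry := by
  have h := HH_ssa (fun (x : X) (_ : Unit) (y : Y) (z : Z) => v x y z)
  have h0 := HH_unit (fun (_ : Unit) (t : X × (Y × Z)) => v t.1 t.2.1 t.2.2)
    (by simpa [Fintype.sum_prod_type] using hv)
  have h1 : HH (fun (s : X × (Unit × Y)) (d : Z) => v s.1 s.2.2 d) = rxy :=
    HH_to hxy ⟨fun s => (s.1, s.2.2), fun s => (s.1, ((), s.2)), fun _ => rfl, fun _ => rfl⟩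
      (Equiv.refl _) (fun _ _ => rfl)
  have h2 : HH (fun (s : X × Unit) (t : Y × Z) => v s.1 t.1 t.2) = rx :=
    HH_to hx ⟨fun s => s.1, fun s => (s, ()), fun _ => rfl, fun _ => rfl⟩
      (Equiv.refl _) (fun _ _ => rfl)
  have h3 : HH (fun (s : Unit × Y) (t : X × Z) => v t.1 s.2 t.2) = ry :=
    HH_to hy ⟨fun s => s.2, fun s => ((), s), fun _ => rfl, fun _ => rfl⟩
      (Equiv.refl _) (fun _ _ => rfl)
  rw [h0, h1, h2, h3] at h
  linarith

lemma L_tri {X Y Z : Type} [Fintype X] [DecidableEq X] [Fintype Y] [DecidableEq Y] [Fintype Z]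
    [DecidableEq Z]
    (v : X → Y → Z → ℂ) (hv : ∑ x, ∑ y, ∑ z, v x y z * star (v x y z) = 1) {rxy rx ry : ℝ}
    (hxy : HH (fun (s : X × Y) z => v s.1 s.2 z) = rxy)
    (hx : HH (fun x (t : Y × Z) => v x t.1 t.2) = rx)
    (hy : HH (fun y (t : X × Z) => v t.1 y t.2) = ry) : rx ≤ rxy + ry := by
  have := L_sa (fun y z x => v x y z) (by
      rw [← hv]
      conv_rhs => rw [Finset.sum_comm]
      refine Finset.sum_congr rfl fun y _ => ?_
      rw [Finset.sum_comm]) (rxy := rx) (rx := ry) (ry := rxy)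
    (by rw [HH_swap]; exact hx)
    (HH_to hy (Equiv.refl _) ⟨fun t => (t.2, t.1), fun t => (t.2, t.1), fun _ => rfl, fun _ => rfl⟩
      (fun _ _ => rfl))
    (by
      rw [HH_swap]
      exact HH_to hxy ⟨fun t => (t.2, t.1), fun t => (t.2, t.1), fun _ => rfl, fun _ => rfl⟩
        (Equiv.refl _) (fun _ _ => rfl))
  linarith

lemma L_ssa {A B C D : Type} [Fintype A] [DecidableEq A] [Fintype B] [DecidableEq B]
    [Fintype C] [DecidableEq C] [Fintype D] (v : A → B → C → D → ℂ) {r1 r2 r3 r4 : ℝ}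
    (h1 : HH (fun (s : A × (B × C)) (d : D) => v s.1 s.2.1 s.2.2 d) = r1)
    (h2 : HH (fun (b : B) (t : A × (C × D)) => v t.1 b t.2.1 t.2.2) = r2)
    (h3 : HH (fun (s : A × B) (t : C × D) => v s.1 s.2 t.1 t.2) = r3)
    (h4 : HH (fun (s : B × C) (t : A × D) => v t.1 s.1 s.2 t.2) = r4) :
    r1 + r2 ≤ r3 + r4 := by
  rw [← h1, ← h2, ← h3, ← h4]; exact HH_ssa v

lemma L_dec {X X' Y Z : Type} [Fintype X] [DecidableEq X] [Fintype X'] [DecidableEq X']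
    [Fintype Y] [DecidableEq Y] [Fintype Z] [DecidableEq Z] (v : X → X' → Y → Z → ℂ)
    (hv : ∑ x, ∑ x', ∑ y, ∑ z, v x x' y z * star (v x x' y z) = 1) {rx ry rxy rw : ℝ}
    (hx : HH (fun x (t : X' × (Y × Z)) => v x t.1 t.2.1 t.2.2) = rx)
    (hy : HH (fun y (t : (X × X') × Z) => v t.1.1 t.1.2 y t.2) = ry)
    (hxy : HH (fun (s : X × Y) (t : X' × Z) => v s.1 t.1 s.2 t.2) = rxy)
    (hw : HH (fun (s : X × X') (t : Y × Z) => v s.1 s.2 t.1 t.2) = rw) :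
    rx + ry ≤ rxy + 2 * rw := by
  obtain ⟨rall, hall⟩ : ∃ r, HH (fun (s : Y × (X × X')) z => v s.2.1 s.2.2 s.1 z) = r := ⟨_, rfl⟩
  have h1 := L_ssa (fun (x' : X') (x : X) (y : Y) (z : Z) => v x x' y z)
    (r1 := rall) (r2 := rx) (r3 := rw) (r4 := rxy)
    (HH_to hall ⟨fun ⟨x', x, y⟩ => (y, x, x'), fun ⟨y, x, x'⟩ => (x', x, y),
      fun _ => rfl, fun _ => rfl⟩ (Equiv.refl _) (fun _ _ => rfl))
    hx
    (HH_to hw ⟨fun ⟨x', x⟩ => (x, x'), fun ⟨x, x'⟩ => (x', x), fun _ => rfl, fun _ => rfl⟩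
      (Equiv.refl _) (fun _ _ => rfl))
    hxy
  have h2 := L_tri (fun (y : Y) (w : X × X') (z : Z) => v w.1 w.2 y z)
    (by
      rw [Finset.sum_comm, ← hv, Fintype.sum_prod_type]) hall hy
    hw
  linarith


lemma nrm_to {X Y Z Ω : Type} [Fintype X] [Fintype Y] [Fintype Z] [Fintype Ω]
    {v : X → Y → Z → ℂ} {g : Ω → ℂ} (hu : ∑ o, g o * star (g o) = 1) (e : X × (Y × Z) ≃ Ω)
    (h : ∀ x y z, v x y z = g (e (x, (y, z)))) :
    ∑ x, ∑ y, ∑ z, v x y z * star (v x y z) = 1 := by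
  rw [← hu, ← e.sum_comp]
  simp only [Fintype.sum_prod_type, h]

lemma core {A W B X E F : Type} [Fintype A] [DecidableEq A] [Fintype W] [DecidableEq W]
    [Fintype B] [DecidableEq B] [Fintype X] [DecidableEq X] [Fintype E] [DecidableEq E]
    [Fintype F] [DecidableEq F] (u : A → W → B → X → E → F → ℂ) (h : ℝ)
    (hu : ∑ o : A × (W × (B × (X × (E × F)))),
      (fun o : A × (W × (B × (X × (E × F)))) =>
        u o.1 o.2.1 o.2.2.1 o.2.2.2.1 o.2.2.2.2.1 o.2.2.2.2.2) o *
      star ((fun o : A × (W × (B × (X × (E × F)))) =>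
        u o.1 o.2.1 o.2.2.1 o.2.2.2.1 o.2.2.2.2.1 o.2.2.2.2.2) o) = 1)
    (hdec : HH (fun (s : (W × X)) (t : (A × (B × (E × F)))) => u t.1 s.1 t.2.1 s.2 t.2.2.1 t.2.2.2)
      + HH (fun (s : (E × F)) (t : (A × (W × (B × X)))) => u t.1 t.2.1 t.2.2.1 t.2.2.2 s.1 s.2)
      ≤ HH (fun (s : (W × (X × (E × F)))) (t : (A × B)) => u t.1 s.1 t.2 s.2.1 s.2.2.1 s.2.2.2) + 2 * h) :
    (HH (fun (s : (A × W)) (t : (B × (X × (E × F)))) => u s.1 s.2 t.1 t.2.1 t.2.2.1 t.2.2.2)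
      + HH (fun (s : (E × F)) (t : (A × (W × (B × X)))) => u t.1 t.2.1 t.2.2.1 t.2.2.2 s.1 s.2)
      - HH (fun (s : (A × (W × (E × F)))) (t : (B × X)) => u s.1 s.2.1 t.1 t.2 s.2.2.1 s.2.2.2)
      ≤ 2 * HH (fun (s : A) (t : (W × (B × (X × (E × F))))) => u s t.1 t.2.1 t.2.2.1 t.2.2.2.1 t.2.2.2.2) + 2 * h) ∧
    (HH (fun (s : (B × X)) (t : (A × (W × (E × F)))) => u t.1 t.2.1 s.1 s.2 t.2.2.1 t.2.2.2)
      + HH (fun (s : (E × F)) (t : (A × (W × (B × X)))) => u t.1 t.2.1 t.2.2.1 t.2.2.2 s.1 s.2)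
      - HH (fun (s : (B × (X × (E × F)))) (t : (A × W)) => u t.1 t.2 s.1 s.2.1 s.2.2.1 s.2.2.2)
      ≤ 2 * HH (fun (s : B) (t : (A × (W × (X × (E × F))))) => u t.1 t.2.1 s t.2.2.1 t.2.2.2.1 t.2.2.2.2) + 2 * h) ∧
    (HH (fun (s : (A × W)) (t : (B × (X × (E × F)))) => u s.1 s.2 t.1 t.2.1 t.2.2.1 t.2.2.2)
      + HH (fun (s : (B × X)) (t : (A × (W × (E × F)))) => u t.1 t.2.1 s.1 s.2 t.2.2.1 t.2.2.2)
      + HH (fun (s : (E × F)) (t : (A × (W × (B × X)))) => u t.1 t.2.1 t.2.2.1 t.2.2.2 s.1 s.2)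
      - (HH (fun (s : (A × (W × E))) (t : (B × (X × F))) => u s.1 s.2.1 t.1 t.2.1 s.2.2 t.2.2)
      + HH (fun (s : (B × (X × E))) (t : (A × (W × F))) => u t.1 t.2.1 s.1 s.2.1 s.2.2 t.2.2)
      - HH (fun (s : (A × (W × (B × (X × E))))) (t : F) => u s.1 s.2.1 s.2.2.1 s.2.2.2.1 s.2.2.2.2 t)
      - HH (fun (s : E) (t : (A × (W × (B × (X × F))))) => u t.1 t.2.1 t.2.2.1 t.2.2.2.1 s t.2.2.2.2)) - 6 * h
      ≤ 2 * (HH (fun (s : A) (t : (W × (B × (X × (E × F))))) => u s t.1 t.2.1 t.2.2.1 t.2.2.2.1 t.2.2.2.2)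
      + HH (fun (s : B) (t : (A × (W × (X × (E × F))))) => u t.1 t.2.1 s t.2.2.1 t.2.2.2.1 t.2.2.2.2))) := by
  obtain ⟨k_aw, h_aw⟩ : ∃ r, HH (fun (s : (A × W)) (t : (B × (X × (E × F)))) => u s.1 s.2 t.1 t.2.1 t.2.2.1 t.2.2.2) = r := ⟨_, rfl⟩
  obtain ⟨k_a, h_a⟩ : ∃ r, HH (fun (s : A) (t : (W × (B × (X × (E × F))))) => u s t.1 t.2.1 t.2.2.1 t.2.2.2.1 t.2.2.2.2) = r := ⟨_, rfl⟩
  obtain ⟨k_w, h_w⟩ : ∃ r, HH (fun (s : W) (t : (A × (B × (X × (E × F))))) => u t.1 s t.2.1 t.2.2.1 t.2.2.2.1 t.2.2.2.2) = r := ⟨_, rfl⟩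
  obtain ⟨k_bx, h_bx⟩ : ∃ r, HH (fun (s : (B × X)) (t : (A × (W × (E × F)))) => u t.1 t.2.1 s.1 s.2 t.2.2.1 t.2.2.2) = r := ⟨_, rfl⟩
  obtain ⟨k_b, h_b⟩ : ∃ r, HH (fun (s : B) (t : (A × (W × (X × (E × F))))) => u t.1 t.2.1 s t.2.2.1 t.2.2.2.1 t.2.2.2.2) = r := ⟨_, rfl⟩
  obtain ⟨k_x, h_x⟩ : ∃ r, HH (fun (s : X) (t : (A × (W × (B × (E × F))))) => u t.1 t.2.1 t.2.2.1 s t.2.2.2.1 t.2.2.2.2) = r := ⟨_, rfl⟩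
  obtain ⟨k_ab, h_ab⟩ : ∃ r, HH (fun (s : (A × B)) (t : (W × (X × (E × F)))) => u s.1 t.1 s.2 t.2.1 t.2.2.1 t.2.2.2) = r := ⟨_, rfl⟩
  obtain ⟨k_wxef, h_wxef⟩ : ∃ r, HH (fun (s : (W × (X × (E × F)))) (t : (A × B)) => u t.1 s.1 t.2 s.2.1 s.2.2.1 s.2.2.2) = r := ⟨_, rfl⟩
  obtain ⟨k_wx, h_wx⟩ : ∃ r, HH (fun (s : (W × X)) (t : (A × (B × (E × F)))) => u t.1 s.1 t.2.1 s.2 t.2.2.1 t.2.2.2) = r := ⟨_, rfl⟩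
  obtain ⟨k_wef, h_wef⟩ : ∃ r, HH (fun (s : (W × (E × F))) (t : (A × (B × X))) => u t.1 s.1 t.2.1 t.2.2 s.2.1 s.2.2) = r := ⟨_, rfl⟩
  obtain ⟨k_xef, h_xef⟩ : ∃ r, HH (fun (s : (X × (E × F))) (t : (A × (W × B))) => u t.1 t.2.1 t.2.2 s.1 s.2.1 s.2.2) = r := ⟨_, rfl⟩
  obtain ⟨k_e, h_e⟩ : ∃ r, HH (fun (s : E) (t : (A × (W × (B × (X × F))))) => u t.1 t.2.1 t.2.2.1 t.2.2.2.1 s t.2.2.2.2) = r := ⟨_, rfl⟩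
  obtain ⟨k_ef, h_ef⟩ : ∃ r, HH (fun (s : (E × F)) (t : (A × (W × (B × X)))) => u t.1 t.2.1 t.2.2.1 t.2.2.2 s.1 s.2) = r := ⟨_, rfl⟩
  obtain ⟨k_we, h_we⟩ : ∃ r, HH (fun (s : (W × E)) (t : (A × (B × (X × F)))) => u t.1 s.1 t.2.1 t.2.2.1 s.2 t.2.2.2) = r := ⟨_, rfl⟩
  obtain ⟨k_xe, h_xe⟩ : ∃ r, HH (fun (s : (X × E)) (t : (A × (W × (B × F)))) => u t.1 t.2.1 t.2.2.1 s.1 s.2 t.2.2.2) = r := ⟨_, rfl⟩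
  obtain ⟨k_wxe, h_wxe⟩ : ∃ r, HH (fun (s : (W × (X × E))) (t : (A × (B × F))) => u t.1 s.1 t.2.1 s.2.1 s.2.2 t.2.2) = r := ⟨_, rfl⟩
  obtain ⟨k_awxe, h_awxe⟩ : ∃ r, HH (fun (s : (A × (W × (X × E)))) (t : (B × F)) => u s.1 s.2.1 t.1 s.2.2.1 s.2.2.2 t.2) = r := ⟨_, rfl⟩
  obtain ⟨k_awe, h_awe⟩ : ∃ r, HH (fun (s : (A × (W × E))) (t : (B × (X × F))) => u s.1 s.2.1 t.1 t.2.1 s.2.2 t.2.2) = r := ⟨_, rfl⟩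
  obtain ⟨k_awbxe, h_awbxe⟩ : ∃ r, HH (fun (s : (A × (W × (B × (X × E))))) (t : F) => u s.1 s.2.1 s.2.2.1 s.2.2.2.1 s.2.2.2.2 t) = r := ⟨_, rfl⟩
  obtain ⟨k_bxe, h_bxe⟩ : ∃ r, HH (fun (s : (B × (X × E))) (t : (A × (W × F))) => u t.1 t.2.1 s.1 s.2.1 s.2.2 t.2.2) = r := ⟨_, rfl⟩
  obtain ⟨k_awef, h_awef⟩ : ∃ r, HH (fun (s : (A × (W × (E × F)))) (t : (B × X)) => u s.1 s.2.1 t.1 t.2 s.2.2.1 s.2.2.2) = r := ⟨_, rfl⟩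
  obtain ⟨k_bxef, h_bxef⟩ : ∃ r, HH (fun (s : (B × (X × (E × F)))) (t : (A × W)) => u t.1 t.2 s.1 s.2.1 s.2.2.1 s.2.2.2) = r := ⟨_, rfl⟩
  have s1 : k_aw ≤ k_a + k_w := L_sa (fun (p0 : A) (p1 : W) (p2 : (B × (X × (E × F)))) => u p0 p1 p2.1 p2.2.1 p2.2.2.1 p2.2.2.2)
    (nrm_to hu (Equiv.refl _) (fun _ _ _ => rfl))
    h_aw
    h_a
    h_w
  have s2 : k_bx ≤ k_b + k_x := L_sa (fun (p0 : B) (p1 : X) (p2 : (A × (W × (E × F)))) => u p2.1 p2.2.1 p0 p1 p2.2.2.1 p2.2.2.2)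
    (nrm_to hu ⟨fun s => (s.2.2.1, (s.2.2.2.1, (s.1, (s.2.1, (s.2.2.2.2.1, s.2.2.2.2.2))))), fun s => (s.2.2.1, (s.2.2.2.1, (s.1, (s.2.1, (s.2.2.2.2.1, s.2.2.2.2.2))))), fun _ => rfl, fun _ => rfl⟩ (fun _ _ _ => rfl))
    h_bx
    (HH_to h_b (Equiv.refl _)
      ⟨fun s => (s.2.1, (s.2.2.1, (s.1, (s.2.2.2.1, s.2.2.2.2)))), fun s => (s.2.2.1, (s.1, (s.2.1, (s.2.2.2.1, s.2.2.2.2)))), fun _ => rfl, fun _ => rfl⟩ (fun _ _ => rfl))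
    (HH_to h_x (Equiv.refl _)
      ⟨fun s => (s.2.1, (s.2.2.1, (s.1, (s.2.2.2.1, s.2.2.2.2)))), fun s => (s.2.2.1, (s.1, (s.2.1, (s.2.2.2.1, s.2.2.2.2)))), fun _ => rfl, fun _ => rfl⟩ (fun _ _ => rfl))
  have s3 : k_ab ≤ k_a + k_b := L_sa (fun (p0 : A) (p1 : B) (p2 : (W × (X × (E × F)))) => u p0 p2.1 p1 p2.2.1 p2.2.2.1 p2.2.2.2)
    (nrm_to hu ⟨fun s => (s.1, (s.2.2.1, (s.2.1, (s.2.2.2.1, (s.2.2.2.2.1, s.2.2.2.2.2))))), fun s => (s.1, (s.2.2.1, (s.2.1, (s.2.2.2.1, (s.2.2.2.2.1, s.2.2.2.2.2))))), fun _ => rfl, fun _ => rfl⟩ (fun _ _ _ => rfl))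
    h_ab
    (HH_to h_a (Equiv.refl _)
      ⟨fun s => (s.2.1, (s.1, (s.2.2.1, (s.2.2.2.1, s.2.2.2.2)))), fun s => (s.2.1, (s.1, (s.2.2.1, (s.2.2.2.1, s.2.2.2.2)))), fun _ => rfl, fun _ => rfl⟩ (fun _ _ => rfl))
    h_b
  have s6 : k_wxef + k_w ≤ k_wx + k_wef := L_ssa (fun (p0 : X) (p1 : W) (p2 : (E × F)) (p3 : (A × B)) => u p3.1 p1 p3.2 p0 p2.1 p2.2)
    (HH_to h_wxef ⟨fun s => (s.2.1, (s.1, (s.2.2.1, s.2.2.2))), fun s => (s.2.1, (s.1, (s.2.2.1, s.2.2.2))), fun _ => rfl, fun _ => rfl⟩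
      (Equiv.refl _) (fun _ _ => rfl))
    (HH_to h_w (Equiv.refl _)
      ⟨fun s => (s.2.2.1, (s.2.2.2, (s.1, (s.2.1.1, s.2.1.2)))), fun s => (s.2.2.1, ((s.2.2.2.1, s.2.2.2.2), (s.1, s.2.1))), fun _ => rfl, fun _ => rfl⟩ (fun _ _ => rfl))
    (HH_to h_wx ⟨fun s => (s.2, s.1), fun s => (s.2, s.1), fun _ => rfl, fun _ => rfl⟩
      ⟨fun s => (s.2.1, (s.2.2, (s.1.1, s.1.2))), fun s => ((s.2.2.1, s.2.2.2), (s.1, s.2.1)), fun _ => rfl, fun _ => rfl⟩ (fun _ _ => rfl))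
    (HH_to h_wef (Equiv.refl _)
      ⟨fun s => (s.2.1, (s.2.2, s.1)), fun s => (s.2.2, (s.1, s.2.1)), fun _ => rfl, fun _ => rfl⟩ (fun _ _ => rfl))
  have s7 : k_wxef + k_x ≤ k_wx + k_xef := L_ssa (fun (p0 : W) (p1 : X) (p2 : (E × F)) (p3 : (A × B)) => u p3.1 p0 p3.2 p1 p2.1 p2.2)
    h_wxef
    (HH_to h_x (Equiv.refl _)
      ⟨fun s => (s.2.2.1, (s.1, (s.2.2.2, (s.2.1.1, s.2.1.2)))), fun s => (s.2.1, ((s.2.2.2.1, s.2.2.2.2), (s.1, s.2.2.1))), fun _ => rfl, fun _ => rfl⟩ (fun _ _ => rfl))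
    (HH_to h_wx (Equiv.refl _)
      ⟨fun s => (s.2.1, (s.2.2, (s.1.1, s.1.2))), fun s => ((s.2.2.1, s.2.2.2), (s.1, s.2.1)), fun _ => rfl, fun _ => rfl⟩ (fun _ _ => rfl))
    (HH_to h_xef (Equiv.refl _)
      ⟨fun s => (s.2.1, (s.1, s.2.2)), fun s => (s.2.1, (s.1, s.2.2)), fun _ => rfl, fun _ => rfl⟩ (fun _ _ => rfl))
  have s8 : k_wef + k_e ≤ k_ef + k_we := L_ssa (fun (p0 : F) (p1 : E) (p2 : W) (p3 : (A × (B × X))) => u p3.1 p2 p3.2.1 p3.2.2 p1 p0)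
    (HH_to h_wef ⟨fun s => (s.2.2, (s.2.1, s.1)), fun s => (s.2.2, (s.2.1, s.1)), fun _ => rfl, fun _ => rfl⟩
      (Equiv.refl _) (fun _ _ => rfl))
    (HH_to h_e (Equiv.refl _)
      ⟨fun s => (s.2.2.1, (s.2.1, (s.2.2.2.1, (s.2.2.2.2, s.1)))), fun s => (s.2.2.2.2, (s.2.1, (s.1, (s.2.2.1, s.2.2.2.1)))), fun _ => rfl, fun _ => rfl⟩ (fun _ _ => rfl))
    (HH_to h_ef ⟨fun s => (s.2, s.1), fun s => (s.2, s.1), fun _ => rfl, fun _ => rfl⟩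
      ⟨fun s => (s.2.1, (s.1, (s.2.2.1, s.2.2.2))), fun s => (s.2.1, (s.1, (s.2.2.1, s.2.2.2))), fun _ => rfl, fun _ => rfl⟩ (fun _ _ => rfl))
    (HH_to h_we ⟨fun s => (s.2, s.1), fun s => (s.2, s.1), fun _ => rfl, fun _ => rfl⟩
      ⟨fun s => (s.2.1, (s.2.2.1, (s.2.2.2, s.1))), fun s => (s.2.2.2, (s.1, (s.2.1, s.2.2.1))), fun _ => rfl, fun _ => rfl⟩ (fun _ _ => rfl))
  have s9 : k_xef + k_e ≤ k_ef + k_xe := L_ssa (fun (p0 : F) (p1 : E) (p2 : X) (p3 : (A × (W × B))) => u p3.1 p3.2.1 p3.2.2 p2 p1 p0)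
    (HH_to h_xef ⟨fun s => (s.2.2, (s.2.1, s.1)), fun s => (s.2.2, (s.2.1, s.1)), fun _ => rfl, fun _ => rfl⟩
      (Equiv.refl _) (fun _ _ => rfl))
    (HH_to h_e (Equiv.refl _)
      ⟨fun s => (s.2.2.1, (s.2.2.2.1, (s.2.2.2.2, (s.2.1, s.1)))), fun s => (s.2.2.2.2, (s.2.2.2.1, (s.1, (s.2.1, s.2.2.1)))), fun _ => rfl, fun _ => rfl⟩ (fun _ _ => rfl))
    (HH_to h_ef ⟨fun s => (s.2, s.1), fun s => (s.2, s.1), fun _ => rfl, fun _ => rfl⟩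
      ⟨fun s => (s.2.1, (s.2.2.1, (s.2.2.2, s.1))), fun s => (s.2.2.2, (s.1, (s.2.1, s.2.2.1))), fun _ => rfl, fun _ => rfl⟩ (fun _ _ => rfl))
    (HH_to h_xe ⟨fun s => (s.2, s.1), fun s => (s.2, s.1), fun _ => rfl, fun _ => rfl⟩
      ⟨fun s => (s.2.1, (s.2.2.1, (s.2.2.2, s.1))), fun s => (s.2.2.2, (s.1, (s.2.1, s.2.2.1))), fun _ => rfl, fun _ => rfl⟩ (fun _ _ => rfl))
  have s10 : k_wxe ≤ k_wx + k_e := L_sa (fun (p0 : (W × X)) (p1 : E) (p2 : (A × (B × F))) => u p2.1 p0.1 p2.2.1 p0.2 p1 p2.2.2)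
    (nrm_to hu ⟨fun s => (s.2.2.1, (s.1.1, (s.2.2.2.1, (s.1.2, (s.2.1, s.2.2.2.2))))), fun s => ((s.2.1, s.2.2.2.1), (s.2.2.2.2.1, (s.1, (s.2.2.1, s.2.2.2.2.2)))), fun _ => rfl, fun _ => rfl⟩ (fun _ _ _ => rfl))
    (HH_to h_wxe ⟨fun s => (s.1.1, (s.1.2, s.2)), fun s => ((s.1, s.2.1), s.2.2), fun _ => rfl, fun _ => rfl⟩
      (Equiv.refl _) (fun _ _ => rfl))
    (HH_to h_wx (Equiv.refl _)
      ⟨fun s => (s.2.1, (s.2.2.1, (s.1, s.2.2.2))), fun s => (s.2.2.1, (s.1, (s.2.1, s.2.2.2))), fun _ => rfl, fun _ => rfl⟩ (fun _ _ => rfl))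
    (HH_to h_e (Equiv.refl _)
      ⟨fun s => (s.2.1, (s.1.1, (s.2.2.1, (s.1.2, s.2.2.2)))), fun s => ((s.2.1, s.2.2.2.1), (s.1, (s.2.2.1, s.2.2.2.2))), fun _ => rfl, fun _ => rfl⟩ (fun _ _ => rfl))
  have s11 : k_awxe + k_we ≤ k_awe + k_wxe := L_ssa (fun (p0 : A) (p1 : (W × E)) (p2 : X) (p3 : (B × F)) => u p0 p1.1 p3.1 p2 p1.2 p3.2)
    (HH_to h_awxe ⟨fun s => (s.1, (s.2.1.1, (s.2.2, s.2.1.2))), fun s => (s.1, ((s.2.1, s.2.2.2), s.2.2.1)), fun _ => rfl, fun _ => rfl⟩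
      (Equiv.refl _) (fun _ _ => rfl))
    (HH_to h_we (Equiv.refl _)
      ⟨fun s => (s.1, (s.2.2.1, (s.2.1, s.2.2.2))), fun s => (s.1, (s.2.2.1, (s.2.1, s.2.2.2))), fun _ => rfl, fun _ => rfl⟩ (fun _ _ => rfl))
    (HH_to h_awe (Equiv.refl _)
      ⟨fun s => (s.2.1, (s.1, s.2.2)), fun s => (s.2.1, (s.1, s.2.2)), fun _ => rfl, fun _ => rfl⟩ (fun _ _ => rfl))
    (HH_to h_wxe ⟨fun s => (s.1.1, (s.2, s.1.2)), fun s => ((s.1, s.2.2), s.2.1), fun _ => rfl, fun _ => rfl⟩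
      (Equiv.refl _) (fun _ _ => rfl))
  have s12 : k_awbxe + k_xe ≤ k_bxe + k_awxe := L_ssa (fun (p0 : B) (p1 : (X × E)) (p2 : (A × W)) (p3 : F) => u p2.1 p2.2 p0 p1.1 p1.2 p3)
    (HH_to h_awbxe ⟨fun s => (s.2.2.1, (s.2.2.2, (s.1, (s.2.1.1, s.2.1.2)))), fun s => (s.2.2.1, ((s.2.2.2.1, s.2.2.2.2), (s.1, s.2.1))), fun _ => rfl, fun _ => rfl⟩
      (Equiv.refl _) (fun _ _ => rfl))
    (HH_to h_xe (Equiv.refl _)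
      ⟨fun s => (s.2.1.1, (s.2.1.2, (s.1, s.2.2))), fun s => (s.2.2.1, ((s.1, s.2.1), s.2.2.2)), fun _ => rfl, fun _ => rfl⟩ (fun _ _ => rfl))
    (HH_to h_bxe (Equiv.refl _)
      ⟨fun s => (s.1.1, (s.1.2, s.2)), fun s => ((s.1, s.2.1), s.2.2), fun _ => rfl, fun _ => rfl⟩ (fun _ _ => rfl))
    (HH_to h_awxe ⟨fun s => (s.2.1, (s.2.2, (s.1.1, s.1.2))), fun s => ((s.2.2.1, s.2.2.2), (s.1, s.2.1)), fun _ => rfl, fun _ => rfl⟩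
      (Equiv.refl _) (fun _ _ => rfl))
  have s13 : k_wef ≤ k_awef + k_a := L_tri (fun (p0 : (W × (E × F))) (p1 : A) (p2 : (B × X)) => u p1 p0.1 p2.1 p2.2 p0.2.1 p0.2.2)
    (nrm_to hu ⟨fun s => (s.2.1, (s.1.1, (s.2.2.1, (s.2.2.2, (s.1.2.1, s.1.2.2))))), fun s => ((s.2.1, (s.2.2.2.2.1, s.2.2.2.2.2)), (s.1, (s.2.2.1, s.2.2.2.1))), fun _ => rfl, fun _ => rfl⟩ (fun _ _ _ => rfl))
    (HH_to h_awef ⟨fun s => (s.2, (s.1.1, (s.1.2.1, s.1.2.2))), fun s => ((s.2.1, (s.2.2.1, s.2.2.2)), s.1), fun _ => rfl, fun _ => rfl⟩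
      (Equiv.refl _) (fun _ _ => rfl))
    h_wef
    (HH_to h_a (Equiv.refl _)
      ⟨fun s => (s.1.1, (s.2.1, (s.2.2, (s.1.2.1, s.1.2.2)))), fun s => ((s.1, (s.2.2.2.1, s.2.2.2.2)), (s.2.1, s.2.2.1)), fun _ => rfl, fun _ => rfl⟩ (fun _ _ => rfl))
  have s14 : k_xef ≤ k_bxef + k_b := L_tri (fun (p0 : (X × (E × F))) (p1 : B) (p2 : (A × W)) => u p2.1 p2.2 p1 p0.1 p0.2.1 p0.2.2)
    (nrm_to hu ⟨fun s => (s.2.2.1, (s.2.2.2, (s.2.1, (s.1.1, (s.1.2.1, s.1.2.2))))), fun s => ((s.2.2.2.1, (s.2.2.2.2.1, s.2.2.2.2.2)), (s.2.2.1, (s.1, s.2.1))), fun _ => rfl, fun _ => rfl⟩ (fun _ _ _ => rfl))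
    (HH_to h_bxef ⟨fun s => (s.2, (s.1.1, (s.1.2.1, s.1.2.2))), fun s => ((s.2.1, (s.2.2.1, s.2.2.2)), s.1), fun _ => rfl, fun _ => rfl⟩
      (Equiv.refl _) (fun _ _ => rfl))
    (HH_to h_xef (Equiv.refl _)
      ⟨fun s => (s.2.1, (s.2.2, s.1)), fun s => (s.2.2, (s.1, s.2.1)), fun _ => rfl, fun _ => rfl⟩ (fun _ _ => rfl))
    (HH_to h_b (Equiv.refl _)
      ⟨fun s => (s.2.1, (s.2.2, (s.1.1, (s.1.2.1, s.1.2.2)))), fun s => ((s.2.2.1, (s.2.2.2.1, s.2.2.2.2)), (s.1, s.2.1)), fun _ => rfl, fun _ => rfl⟩ (fun _ _ => rfl))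
  have s4 : k_ab = k_wxef := by
    rw [← h_ab, HH_swap]; exact h_wxef
  rw [h_wx, h_ef, h_wxef] at hdec
  rw [h_aw, h_ef, h_awef, h_a, h_bx, h_bxef, h_b, h_awe, h_bxe, h_awbxe, h_e]
  refine ⟨?_, ?_, ?_⟩ <;> linarith


lemma eta_mul (x y : ℝ) : eta (x * y) = eta x * y + x * eta y := by
  unfold eta
  by_cases hx : x = 0
  · simp [hx]
  by_cases hy : y = 0
  · simp [hy]
  rw [Real.logb_mul hx hy]; ring

open Kronecker in
lemma HH_prod {S S' T T' : Type} [Fintype S] [DecidableEq S] [Fintype T]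
    [Fintype S'] [DecidableEq S'] [Fintype T'] (f : S → T → ℂ) (g : S' → T' → ℂ)
    (hf : ∑ s, ∑ t, f s t * star (f s t) = 1) (hg : ∑ s, ∑ t, g s t * star (g s t) = 1) :
    HH (fun (s : S × S') (t : T × T') => f s.1 t.1 * g s.2 t.2) = HH f + HH g := by
  obtain ⟨U, hU, -, eU⟩ := eigen_decomp (rd_psd f).1
  obtain ⟨V, hV, -, eV⟩ := eigen_decomp (rd_psd g).1
  have h1 : rd (fun (s : S × S') (t : T × T') => f s.1 t.1 * g s.2 t.2) = (rd f) ⊗ₖ (rd g) := by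
    ext s s'
    simp only [rd, of_apply, kroneckerMap_apply, Fintype.sum_prod_type, Finset.sum_mul_sum]
    refine Finset.sum_congr rfl fun t _ => Finset.sum_congr rfl fun t' _ => ?_
    rw [star_mul]; ring
  have h2 : (rd f) ⊗ₖ (rd g) = (U ⊗ₖ V) * diagonal (fun i : S × S' =>
      (((rd_psd f).1.eigenvalues i.1 * (rd_psd g).1.eigenvalues i.2 : ℝ) : ℂ)) * (U ⊗ₖ V)ᴴ := by
    conv_lhs => rw [eU, eV]
    rw [conjTranspose_kronecker, mul_kronecker_mul, mul_kronecker_mul, diagonal_kronecker_diagonal]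
    simp
  unfold HH
  rw [h1, h2, vnEntropy_of_diag _ _ (by
    rw [conjTranspose_kronecker, ← mul_kronecker_mul, hU, hV, one_kronecker_one])]
  change _ = HH f + HH g
  rw [HH_eq_sum f, HH_eq_sum g, Fintype.sum_prod_type]
  simp only [eta_mul, Finset.sum_add_distrib]
  simp only [← Finset.mul_sum, ← Finset.sum_mul, eig_sum f hf, eig_sum g hg]
  ring

lemma iid_norm {X : Type} [Fintype X] (f : X → ℂ)
    (hf : ∑ s, f s * star (f s) = 1) (n : ℕ) :
    ∑ s : Fin n → X, (∏ k, f (s k)) * star (∏ k, f (s k)) = 1 := by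
  classical
  have := Finset.prod_univ_sum (fun _ : Fin n => (Finset.univ : Finset X))
    (fun _ s => f s * star (f s))
  simp only [hf, Finset.prod_const_one, Fintype.piFinset_univ] at this
  rw [this]
  refine Finset.sum_congr rfl fun s _ => ?_
  rw [star_prod, Finset.prod_mul_distrib]

lemma HH_iid {S T : Type} [Fintype S] [DecidableEq S] [Fintype T] [DecidableEq T] (f : S → T → ℂ)
    (hf : ∑ s, ∑ t, f s t * star (f s t) = 1) (n : ℕ) :
    HH (fun (s : Fin n → S) (t : Fin n → T) => ∏ k, f (s k) (t k)) = n * HH f := by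
  induction n with
  | zero =>
    simp only [Finset.univ_eq_empty, Finset.prod_empty, Nat.cast_zero, zero_mul]
    exact HH_to (HH_unit (fun _ (_ : Unit) => 1) (by simp)) (Equiv.ofUnique _ _)
      (Equiv.ofUnique _ _) (fun _ _ => rfl)
  | succ n ih =>
    have hn : ∑ s : Fin n → S, ∑ t : Fin n → T,
        (∏ k, f (s k) (t k)) * star (∏ k, f (s k) (t k)) = 1 := by
      rw [← Fintype.sum_prod_type']
      rw [← iid_norm (fun p : S × T => f p.1 p.2) (by rw [Fintype.sum_prod_type]; exact hf) n]
      exact Fintype.sum_equiv (Equiv.arrowProdEquivProdArrow (Fin n) (fun _ => S) (fun _ => T)).symm _ _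
        (fun _ => rfl)
    have := HH_prod f _ hf hn
    rw [ih] at this
    refine (HH_to this (Fin.consEquiv (fun _ => S)).symm (Fin.consEquiv (fun _ => T)).symm
      (fun s t => ?_)).trans ?_
    · rw [Fin.prod_univ_succ]; rfl
    · push_cast; ring


noncomputable def enc {A B E F γA ωA γB ωB : Type} [Fintype A] [DecidableEq A] [Fintype B] [DecidableEq B]
    (EA : Matrix (γA × ωA) A ℂ) (EB : Matrix (γB × ωB) B ℂ) (ψ : A → B → E → F → ℂ)
    (cA : γA) (wA : ωA) (cB : γB) (wB : ωB) (e : E) (f : F) : ℂ :=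
  ∑ y, EA (cA, wA) y * ∑ z, EB (cB, wB) z * ψ y z e f


lemma nrm4 {A B E F S T : Type} [Fintype A] [Fintype B] [Fintype E] [Fintype F] [Fintype S] [Fintype T]
    {χ : A → B → E → F → ℂ}
    (hχ : ∑ o : A × (B × (E × F)), χ o.1 o.2.1 o.2.2.1 o.2.2.2 * star (χ o.1 o.2.1 o.2.2.1 o.2.2.2) = 1)
    {g : S → T → ℂ} (e : S × T ≃ A × (B × (E × F)))
    (h : ∀ s t, g s t = χ (e (s,t)).1 (e (s,t)).2.1 (e (s,t)).2.2.1 (e (s,t)).2.2.2) :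
    ∑ s, ∑ t, g s t * star (g s t) = 1 := by
  rw [← Fintype.sum_prod_type', ← hχ]
  exact Fintype.sum_equiv e _ _ (fun p => by rw [h])

lemma enc_aw {A B E F γA ωA γB ωB : Type} [Fintype A] [DecidableEq A] [Fintype B] [DecidableEq B]
    [Fintype E] [DecidableEq E] [Fintype F] [DecidableEq F] [Fintype γA] [DecidableEq γA]
    [Fintype ωA] [DecidableEq ωA] [Fintype γB] [DecidableEq γB] [Fintype ωB] [DecidableEq ωB]
    {EA : Matrix (γA × ωA) A ℂ} (hEA : EAᴴ * EA = 1)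
    {EB : Matrix (γB × ωB) B ℂ} (hEB : EBᴴ * EB = 1) (ψ : A → B → E → F → ℂ) :
    HH (fun (s : (γA × ωA)) (t : (γB × (ωB × (E × F)))) => enc EA EB ψ s.1 s.2 t.1 t.2.1 t.2.2.1 t.2.2.2) = HH (fun (s : A) (t : (B × (E × F))) => ψ s t.1 t.2.1 t.2.2) := by
  unfold enc
  have h1 := HH_iso_left hEA (fun (s : (A × Unit)) (t : (γB × (ωB × (E × F)))) => ∑ z, EB (t.1, t.2.1) z * ψ s.1 z t.2.2.1 t.2.2.2)
  refine Eq.trans (HH_to h1 ⟨fun s => ((s.1, s.2), ()), fun s => (s.1.1, s.1.2), fun _ => rfl, fun _ => rfl⟩ (Equiv.refl _) ?_) ?_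
  · intro s t; rfl
  have h2 := HH_iso_right hEB (fun (s : A) (t : (B × (E × F))) => ψ s t.1 t.2.1 t.2.2)
  refine Eq.trans (HH_to h2 ⟨fun s => s.1, fun s => (s, ()), fun _ => rfl, fun _ => rfl⟩ ⟨fun s => ((s.1, s.2.1), (s.2.2.1, s.2.2.2)), fun s => (s.1.1, (s.1.2, (s.2.1, s.2.2))), fun _ => rfl, fun _ => rfl⟩ ?_) ?_
  · intro s t; rfl
  exact HH_to rfl (Equiv.refl _) (Equiv.refl _) (fun _ _ => rfl)

lemma iid_y {A B E F : Type} [Fintype A] [DecidableEq A] [Fintype B] [DecidableEq B]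
    [Fintype E] [DecidableEq E] [Fintype F] [DecidableEq F] (n : ℕ) {χ : A → B → E → F → ℂ}
    (hχ : ∑ o : A × (B × (E × F)), χ o.1 o.2.1 o.2.2.1 o.2.2.2 * star (χ o.1 o.2.1 o.2.2.1 o.2.2.2) = 1) :
    HH (fun (s : (Fin n → A)) (t : ((Fin n → B) × ((Fin n → E) × (Fin n → F)))) => ∏ k, χ (s k) (t.1 k) (t.2.1 k) (t.2.2 k)) = n * HH (fun (s : A) (t : (B × (E × F))) => χ s t.1 t.2.1 t.2.2) := by
  have h1 := HH_iid (fun (s : A) (t : (B × (E × F))) => χ s t.1 t.2.1 t.2.2) (nrm4 hχ (Equiv.refl _) (fun _ _ => rfl)) n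
  exact HH_to h1 (Equiv.refl _) ⟨fun s k => ((s.1 k), ((s.2.1 k), (s.2.2 k))), fun s => ((fun k => (s k).1), ((fun k => (s k).2.1), (fun k => (s k).2.2))), fun _ => rfl, fun _ => rfl⟩ (fun _ _ => rfl)

lemma enc_bx {A B E F γA ωA γB ωB : Type} [Fintype A] [DecidableEq A] [Fintype B] [DecidableEq B]
    [Fintype E] [DecidableEq E] [Fintype F] [DecidableEq F] [Fintype γA] [DecidableEq γA]
    [Fintype ωA] [DecidableEq ωA] [Fintype γB] [DecidableEq γB] [Fintype ωB] [DecidableEq ωB]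
    {EA : Matrix (γA × ωA) A ℂ} (hEA : EAᴴ * EA = 1)
    {EB : Matrix (γB × ωB) B ℂ} (hEB : EBᴴ * EB = 1) (ψ : A → B → E → F → ℂ) :
    HH (fun (s : (γB × ωB)) (t : (γA × (ωA × (E × F)))) => enc EA EB ψ t.1 t.2.1 s.1 s.2 t.2.2.1 t.2.2.2) = HH (fun (s : B) (t : (A × (E × F))) => ψ t.1 s t.2.1 t.2.2) := by
  unfold enc
  have h1 := HH_iso_right hEA (fun (s : (γB × ωB)) (t : (A × (E × F))) => ∑ z, EB (s.1, s.2) z * ψ t.1 z t.2.1 t.2.2)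
  refine Eq.trans (HH_to h1 (Equiv.refl _) ⟨fun s => ((s.1, s.2.1), (s.2.2.1, s.2.2.2)), fun s => (s.1.1, (s.1.2, (s.2.1, s.2.2))), fun _ => rfl, fun _ => rfl⟩ ?_) ?_
  · intro s t; rfl
  have h2 := HH_iso_left hEB (fun (s : (B × Unit)) (t : (A × (E × F))) => ψ t.1 s.1 t.2.1 t.2.2)
  refine Eq.trans (HH_to h2 ⟨fun s => ((s.1, s.2), ()), fun s => (s.1.1, s.1.2), fun _ => rfl, fun _ => rfl⟩ (Equiv.refl _) ?_) ?_
  · intro s t; rfl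
  exact HH_to rfl ⟨fun s => s.1, fun s => (s, ()), fun _ => rfl, fun _ => rfl⟩ (Equiv.refl _) (fun _ _ => rfl)

lemma iid_z {A B E F : Type} [Fintype A] [DecidableEq A] [Fintype B] [DecidableEq B]
    [Fintype E] [DecidableEq E] [Fintype F] [DecidableEq F] (n : ℕ) {χ : A → B → E → F → ℂ}
    (hχ : ∑ o : A × (B × (E × F)), χ o.1 o.2.1 o.2.2.1 o.2.2.2 * star (χ o.1 o.2.1 o.2.2.1 o.2.2.2) = 1) :
    HH (fun (s : (Fin n → B)) (t : ((Fin n → A) × ((Fin n → E) × (Fin n → F)))) => ∏ k, χ (t.1 k) (s k) (t.2.1 k) (t.2.2 k)) = n * HH (fun (s : B) (t : (A × (E × F))) => χ t.1 s t.2.1 t.2.2) := by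
  have h1 := HH_iid (fun (s : B) (t : (A × (E × F))) => χ t.1 s t.2.1 t.2.2) (nrm4 hχ ⟨fun s => (s.2.1, (s.1, (s.2.2.1, s.2.2.2))), fun s => (s.2.1, (s.1, (s.2.2.1, s.2.2.2))), fun _ => rfl, fun _ => rfl⟩ (fun _ _ => rfl)) n
  exact HH_to h1 (Equiv.refl _) ⟨fun s k => ((s.1 k), ((s.2.1 k), (s.2.2 k))), fun s => ((fun k => (s k).1), ((fun k => (s k).2.1), (fun k => (s k).2.2))), fun _ => rfl, fun _ => rfl⟩ (fun _ _ => rfl)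

lemma enc_ef {A B E F γA ωA γB ωB : Type} [Fintype A] [DecidableEq A] [Fintype B] [DecidableEq B]
    [Fintype E] [DecidableEq E] [Fintype F] [DecidableEq F] [Fintype γA] [DecidableEq γA]
    [Fintype ωA] [DecidableEq ωA] [Fintype γB] [DecidableEq γB] [Fintype ωB] [DecidableEq ωB]
    {EA : Matrix (γA × ωA) A ℂ} (hEA : EAᴴ * EA = 1)
    {EB : Matrix (γB × ωB) B ℂ} (hEB : EBᴴ * EB = 1) (ψ : A → B → E → F → ℂ) :
    HH (fun (s : (E × F)) (t : (γA × (ωA × (γB × ωB)))) => enc EA EB ψ t.1 t.2.1 t.2.2.1 t.2.2.2 s.1 s.2) = HH (fun (s : (E × F)) (t : (A × B)) => ψ t.1 t.2 s.1 s.2) := by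
  unfold enc
  have h1 := HH_iso_right hEA (fun (s : (E × F)) (t : (A × (γB × ωB))) => ∑ z, EB (t.2.1, t.2.2) z * ψ t.1 z s.1 s.2)
  refine Eq.trans (HH_to h1 (Equiv.refl _) ⟨fun s => ((s.1, s.2.1), (s.2.2.1, s.2.2.2)), fun s => (s.1.1, (s.1.2, (s.2.1, s.2.2))), fun _ => rfl, fun _ => rfl⟩ ?_) ?_
  · intro s t; rfl
  have h2 := HH_iso_right hEB (fun (s : (E × F)) (t : (B × A)) => ψ t.2 t.1 s.1 s.2)
  refine Eq.trans (HH_to h2 (Equiv.refl _) ⟨fun s => ((s.2.1, s.2.2), s.1), fun s => (s.2, (s.1.1, s.1.2)), fun _ => rfl, fun _ => rfl⟩ ?_) ?_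
  · intro s t; rfl
  exact HH_to rfl (Equiv.refl _) ⟨fun s => (s.2, s.1), fun s => (s.2, s.1), fun _ => rfl, fun _ => rfl⟩ (fun _ _ => rfl)

lemma iid_ef {A B E F : Type} [Fintype A] [DecidableEq A] [Fintype B] [DecidableEq B]
    [Fintype E] [DecidableEq E] [Fintype F] [DecidableEq F] (n : ℕ) {χ : A → B → E → F → ℂ}
    (hχ : ∑ o : A × (B × (E × F)), χ o.1 o.2.1 o.2.2.1 o.2.2.2 * star (χ o.1 o.2.1 o.2.2.1 o.2.2.2) = 1) :
    HH (fun (s : ((Fin n → E) × (Fin n → F))) (t : ((Fin n → A) × (Fin n → B))) => ∏ k, χ (t.1 k) (t.2 k) (s.1 k) (s.2 k)) = n * HH (fun (s : (E × F)) (t : (A × B)) => χ t.1 t.2 s.1 s.2) := by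
  have h1 := HH_iid (fun (s : (E × F)) (t : (A × B)) => χ t.1 t.2 s.1 s.2) (nrm4 hχ ⟨fun s => (s.2.1, (s.2.2, (s.1.1, s.1.2))), fun s => ((s.2.2.1, s.2.2.2), (s.1, s.2.1)), fun _ => rfl, fun _ => rfl⟩ (fun _ _ => rfl)) n
  exact HH_to h1 ⟨fun s k => ((s.1 k), (s.2 k)), fun s => ((fun k => (s k).1), (fun k => (s k).2)), fun _ => rfl, fun _ => rfl⟩ ⟨fun s k => ((s.1 k), (s.2 k)), fun s => ((fun k => (s k).1), (fun k => (s k).2)), fun _ => rfl, fun _ => rfl⟩ (fun _ _ => rfl)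

lemma enc_awef {A B E F γA ωA γB ωB : Type} [Fintype A] [DecidableEq A] [Fintype B] [DecidableEq B]
    [Fintype E] [DecidableEq E] [Fintype F] [DecidableEq F] [Fintype γA] [DecidableEq γA]
    [Fintype ωA] [DecidableEq ωA] [Fintype γB] [DecidableEq γB] [Fintype ωB] [DecidableEq ωB]
    {EA : Matrix (γA × ωA) A ℂ} (hEA : EAᴴ * EA = 1)
    {EB : Matrix (γB × ωB) B ℂ} (hEB : EBᴴ * EB = 1) (ψ : A → B → E → F → ℂ) :
    HH (fun (s : (γA × (ωA × (E × F)))) (t : (γB × ωB)) => enc EA EB ψ s.1 s.2.1 t.1 t.2 s.2.2.1 s.2.2.2) = HH (fun (s : (A × (E × F))) (t : B) => ψ s.1 t s.2.1 s.2.2) := by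
  unfold enc
  have h1 := HH_iso_left hEA (fun (s : (A × (E × F))) (t : (γB × ωB)) => ∑ z, EB (t.1, t.2) z * ψ s.1 z s.2.1 s.2.2)
  refine Eq.trans (HH_to h1 ⟨fun s => ((s.1, s.2.1), (s.2.2.1, s.2.2.2)), fun s => (s.1.1, (s.1.2, (s.2.1, s.2.2))), fun _ => rfl, fun _ => rfl⟩ (Equiv.refl _) ?_) ?_
  · intro s t; rfl
  have h2 := HH_iso_right hEB (fun (s : (A × (E × F))) (t : (B × Unit)) => ψ s.1 t.1 s.2.1 s.2.2)
  refine Eq.trans (HH_to h2 (Equiv.refl _) ⟨fun s => ((s.1, s.2), ()), fun s => (s.1.1, s.1.2), fun _ => rfl, fun _ => rfl⟩ ?_) ?_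
  · intro s t; rfl
  exact HH_to rfl (Equiv.refl _) ⟨fun s => s.1, fun s => (s, ()), fun _ => rfl, fun _ => rfl⟩ (fun _ _ => rfl)

lemma iid_yef {A B E F : Type} [Fintype A] [DecidableEq A] [Fintype B] [DecidableEq B]
    [Fintype E] [DecidableEq E] [Fintype F] [DecidableEq F] (n : ℕ) {χ : A → B → E → F → ℂ}
    (hχ : ∑ o : A × (B × (E × F)), χ o.1 o.2.1 o.2.2.1 o.2.2.2 * star (χ o.1 o.2.1 o.2.2.1 o.2.2.2) = 1) :
    HH (fun (s : ((Fin n → A) × ((Fin n → E) × (Fin n → F)))) (t : (Fin n → B)) => ∏ k, χ (s.1 k) (t k) (s.2.1 k) (s.2.2 k)) = n * HH (fun (s : (A × (E × F))) (t : B) => χ s.1 t s.2.1 s.2.2) := by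
  have h1 := HH_iid (fun (s : (A × (E × F))) (t : B) => χ s.1 t s.2.1 s.2.2) (nrm4 hχ ⟨fun s => (s.1.1, (s.2, (s.1.2.1, s.1.2.2))), fun s => ((s.1, (s.2.2.1, s.2.2.2)), s.2.1), fun _ => rfl, fun _ => rfl⟩ (fun _ _ => rfl)) n
  exact HH_to h1 ⟨fun s k => ((s.1 k), ((s.2.1 k), (s.2.2 k))), fun s => ((fun k => (s k).1), ((fun k => (s k).2.1), (fun k => (s k).2.2))), fun _ => rfl, fun _ => rfl⟩ (Equiv.refl _) (fun _ _ => rfl)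

lemma enc_bxef {A B E F γA ωA γB ωB : Type} [Fintype A] [DecidableEq A] [Fintype B] [DecidableEq B]
    [Fintype E] [DecidableEq E] [Fintype F] [DecidableEq F] [Fintype γA] [DecidableEq γA]
    [Fintype ωA] [DecidableEq ωA] [Fintype γB] [DecidableEq γB] [Fintype ωB] [DecidableEq ωB]
    {EA : Matrix (γA × ωA) A ℂ} (hEA : EAᴴ * EA = 1)
    {EB : Matrix (γB × ωB) B ℂ} (hEB : EBᴴ * EB = 1) (ψ : A → B → E → F → ℂ) :
    HH (fun (s : (γB × (ωB × (E × F)))) (t : (γA × ωA)) => enc EA EB ψ t.1 t.2 s.1 s.2.1 s.2.2.1 s.2.2.2) = HH (fun (s : (B × (E × F))) (t : A) => ψ t s.1 s.2.1 s.2.2) := by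
  unfold enc
  have h1 := HH_iso_right hEA (fun (s : (γB × (ωB × (E × F)))) (t : (A × Unit)) => ∑ z, EB (s.1, s.2.1) z * ψ t.1 z s.2.2.1 s.2.2.2)
  refine Eq.trans (HH_to h1 (Equiv.refl _) ⟨fun s => ((s.1, s.2), ()), fun s => (s.1.1, s.1.2), fun _ => rfl, fun _ => rfl⟩ ?_) ?_
  · intro s t; rfl
  have h2 := HH_iso_left hEB (fun (s : (B × (E × F))) (t : A) => ψ t s.1 s.2.1 s.2.2)
  refine Eq.trans (HH_to h2 ⟨fun s => ((s.1, s.2.1), (s.2.2.1, s.2.2.2)), fun s => (s.1.1, (s.1.2, (s.2.1, s.2.2))), fun _ => rfl, fun _ => rfl⟩ ⟨fun s => s.1, fun s => (s, ()), fun _ => rfl, fun _ => rfl⟩ ?_) ?_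
  · intro s t; rfl
  exact HH_to rfl (Equiv.refl _) (Equiv.refl _) (fun _ _ => rfl)

lemma iid_zef {A B E F : Type} [Fintype A] [DecidableEq A] [Fintype B] [DecidableEq B]
    [Fintype E] [DecidableEq E] [Fintype F] [DecidableEq F] (n : ℕ) {χ : A → B → E → F → ℂ}
    (hχ : ∑ o : A × (B × (E × F)), χ o.1 o.2.1 o.2.2.1 o.2.2.2 * star (χ o.1 o.2.1 o.2.2.1 o.2.2.2) = 1) :
    HH (fun (s : ((Fin n → B) × ((Fin n → E) × (Fin n → F)))) (t : (Fin n → A)) => ∏ k, χ (t k) (s.1 k) (s.2.1 k) (s.2.2 k)) = n * HH (fun (s : (B × (E × F))) (t : A) => χ t s.1 s.2.1 s.2.2) := by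
  have h1 := HH_iid (fun (s : (B × (E × F))) (t : A) => χ t s.1 s.2.1 s.2.2) (nrm4 hχ ⟨fun s => (s.2, (s.1.1, (s.1.2.1, s.1.2.2))), fun s => ((s.2.1, (s.2.2.1, s.2.2.2)), s.1), fun _ => rfl, fun _ => rfl⟩ (fun _ _ => rfl)) n
  exact HH_to h1 ⟨fun s k => ((s.1 k), ((s.2.1 k), (s.2.2 k))), fun s => ((fun k => (s k).1), ((fun k => (s k).2.1), (fun k => (s k).2.2))), fun _ => rfl, fun _ => rfl⟩ (Equiv.refl _) (fun _ _ => rfl)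

lemma enc_awe {A B E F γA ωA γB ωB : Type} [Fintype A] [DecidableEq A] [Fintype B] [DecidableEq B]
    [Fintype E] [DecidableEq E] [Fintype F] [DecidableEq F] [Fintype γA] [DecidableEq γA]
    [Fintype ωA] [DecidableEq ωA] [Fintype γB] [DecidableEq γB] [Fintype ωB] [DecidableEq ωB]
    {EA : Matrix (γA × ωA) A ℂ} (hEA : EAᴴ * EA = 1)
    {EB : Matrix (γB × ωB) B ℂ} (hEB : EBᴴ * EB = 1) (ψ : A → B → E → F → ℂ) :
    HH (fun (s : (γA × (ωA × E))) (t : (γB × (ωB × F))) => enc EA EB ψ s.1 s.2.1 t.1 t.2.1 s.2.2 t.2.2) = HH (fun (s : (A × E)) (t : (B × F)) => ψ s.1 t.1 s.2 t.2) := by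
  unfold enc
  have h1 := HH_iso_left hEA (fun (s : (A × E)) (t : (γB × (ωB × F))) => ∑ z, EB (t.1, t.2.1) z * ψ s.1 z s.2 t.2.2)
  refine Eq.trans (HH_to h1 ⟨fun s => ((s.1, s.2.1), s.2.2), fun s => (s.1.1, (s.1.2, s.2)), fun _ => rfl, fun _ => rfl⟩ (Equiv.refl _) ?_) ?_
  · intro s t; rfl
  have h2 := HH_iso_right hEB (fun (s : (A × E)) (t : (B × F)) => ψ s.1 t.1 s.2 t.2)
  refine Eq.trans (HH_to h2 (Equiv.refl _) ⟨fun s => ((s.1, s.2.1), s.2.2), fun s => (s.1.1, (s.1.2, s.2)), fun _ => rfl, fun _ => rfl⟩ ?_) ?_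
  · intro s t; rfl
  exact HH_to rfl (Equiv.refl _) (Equiv.refl _) (fun _ _ => rfl)

lemma iid_ye {A B E F : Type} [Fintype A] [DecidableEq A] [Fintype B] [DecidableEq B]
    [Fintype E] [DecidableEq E] [Fintype F] [DecidableEq F] (n : ℕ) {χ : A → B → E → F → ℂ}
    (hχ : ∑ o : A × (B × (E × F)), χ o.1 o.2.1 o.2.2.1 o.2.2.2 * star (χ o.1 o.2.1 o.2.2.1 o.2.2.2) = 1) :
    HH (fun (s : ((Fin n → A) × (Fin n → E))) (t : ((Fin n → B) × (Fin n → F))) => ∏ k, χ (s.1 k) (t.1 k) (s.2 k) (t.2 k)) = n * HH (fun (s : (A × E)) (t : (B × F)) => χ s.1 t.1 s.2 t.2) := by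
  have h1 := HH_iid (fun (s : (A × E)) (t : (B × F)) => χ s.1 t.1 s.2 t.2) (nrm4 hχ ⟨fun s => (s.1.1, (s.2.1, (s.1.2, s.2.2))), fun s => ((s.1, s.2.2.1), (s.2.1, s.2.2.2)), fun _ => rfl, fun _ => rfl⟩ (fun _ _ => rfl)) n
  exact HH_to h1 ⟨fun s k => ((s.1 k), (s.2 k)), fun s => ((fun k => (s k).1), (fun k => (s k).2)), fun _ => rfl, fun _ => rfl⟩ ⟨fun s k => ((s.1 k), (s.2 k)), fun s => ((fun k => (s k).1), (fun k => (s k).2)), fun _ => rfl, fun _ => rfl⟩ (fun _ _ => rfl)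

lemma enc_bxe {A B E F γA ωA γB ωB : Type} [Fintype A] [DecidableEq A] [Fintype B] [DecidableEq B]
    [Fintype E] [DecidableEq E] [Fintype F] [DecidableEq F] [Fintype γA] [DecidableEq γA]
    [Fintype ωA] [DecidableEq ωA] [Fintype γB] [DecidableEq γB] [Fintype ωB] [DecidableEq ωB]
    {EA : Matrix (γA × ωA) A ℂ} (hEA : EAᴴ * EA = 1)
    {EB : Matrix (γB × ωB) B ℂ} (hEB : EBᴴ * EB = 1) (ψ : A → B → E → F → ℂ) :
    HH (fun (s : (γB × (ωB × E))) (t : (γA × (ωA × F))) => enc EA EB ψ t.1 t.2.1 s.1 s.2.1 s.2.2 t.2.2) = HH (fun (s : (B × E)) (t : (A × F)) => ψ t.1 s.1 s.2 t.2) := by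
  unfold enc
  have h1 := HH_iso_right hEA (fun (s : (γB × (ωB × E))) (t : (A × F)) => ∑ z, EB (s.1, s.2.1) z * ψ t.1 z s.2.2 t.2)
  refine Eq.trans (HH_to h1 (Equiv.refl _) ⟨fun s => ((s.1, s.2.1), s.2.2), fun s => (s.1.1, (s.1.2, s.2)), fun _ => rfl, fun _ => rfl⟩ ?_) ?_
  · intro s t; rfl
  have h2 := HH_iso_left hEB (fun (s : (B × E)) (t : (A × F)) => ψ t.1 s.1 s.2 t.2)
  refine Eq.trans (HH_to h2 ⟨fun s => ((s.1, s.2.1), s.2.2), fun s => (s.1.1, (s.1.2, s.2)), fun _ => rfl, fun _ => rfl⟩ (Equiv.refl _) ?_) ?_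
  · intro s t; rfl
  exact HH_to rfl (Equiv.refl _) (Equiv.refl _) (fun _ _ => rfl)

lemma iid_ze {A B E F : Type} [Fintype A] [DecidableEq A] [Fintype B] [DecidableEq B]
    [Fintype E] [DecidableEq E] [Fintype F] [DecidableEq F] (n : ℕ) {χ : A → B → E → F → ℂ}
    (hχ : ∑ o : A × (B × (E × F)), χ o.1 o.2.1 o.2.2.1 o.2.2.2 * star (χ o.1 o.2.1 o.2.2.1 o.2.2.2) = 1) :
    HH (fun (s : ((Fin n → B) × (Fin n → E))) (t : ((Fin n → A) × (Fin n → F))) => ∏ k, χ (t.1 k) (s.1 k) (s.2 k) (t.2 k)) = n * HH (fun (s : (B × E)) (t : (A × F)) => χ t.1 s.1 s.2 t.2) := by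
  have h1 := HH_iid (fun (s : (B × E)) (t : (A × F)) => χ t.1 s.1 s.2 t.2) (nrm4 hχ ⟨fun s => (s.2.1, (s.1.1, (s.1.2, s.2.2))), fun s => ((s.2.1, s.2.2.1), (s.1, s.2.2.2)), fun _ => rfl, fun _ => rfl⟩ (fun _ _ => rfl)) n
  exact HH_to h1 ⟨fun s k => ((s.1 k), (s.2 k)), fun s => ((fun k => (s k).1), (fun k => (s k).2)), fun _ => rfl, fun _ => rfl⟩ ⟨fun s k => ((s.1 k), (s.2 k)), fun s => ((fun k => (s k).1), (fun k => (s k).2)), fun _ => rfl, fun _ => rfl⟩ (fun _ _ => rfl)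

lemma enc_awbxe {A B E F γA ωA γB ωB : Type} [Fintype A] [DecidableEq A] [Fintype B] [DecidableEq B]
    [Fintype E] [DecidableEq E] [Fintype F] [DecidableEq F] [Fintype γA] [DecidableEq γA]
    [Fintype ωA] [DecidableEq ωA] [Fintype γB] [DecidableEq γB] [Fintype ωB] [DecidableEq ωB]
    {EA : Matrix (γA × ωA) A ℂ} (hEA : EAᴴ * EA = 1)
    {EB : Matrix (γB × ωB) B ℂ} (hEB : EBᴴ * EB = 1) (ψ : A → B → E → F → ℂ) :
    HH (fun (s : (γA × (ωA × (γB × (ωB × E))))) (t : F) => enc EA EB ψ s.1 s.2.1 s.2.2.1 s.2.2.2.1 s.2.2.2.2 t) = HH (fun (s : (A × (B × E))) (t : F) => ψ s.1 s.2.1 s.2.2 t) := by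
  unfold enc
  have h1 := HH_iso_left hEA (fun (s : (A × (γB × (ωB × E)))) (t : F) => ∑ z, EB (s.2.1, s.2.2.1) z * ψ s.1 z s.2.2.2 t)
  refine Eq.trans (HH_to h1 ⟨fun s => ((s.1, s.2.1), (s.2.2.1, (s.2.2.2.1, s.2.2.2.2))), fun s => (s.1.1, (s.1.2, (s.2.1, (s.2.2.1, s.2.2.2)))), fun _ => rfl, fun _ => rfl⟩ (Equiv.refl _) ?_) ?_
  · intro s t; rfl
  have h2 := HH_iso_left hEB (fun (s : (B × (A × E))) (t : F) => ψ s.2.1 s.1 s.2.2 t)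
  refine Eq.trans (HH_to h2 ⟨fun s => ((s.2.1, s.2.2.1), (s.1, s.2.2.2)), fun s => (s.2.1, (s.1.1, (s.1.2, s.2.2))), fun _ => rfl, fun _ => rfl⟩ (Equiv.refl _) ?_) ?_
  · intro s t; rfl
  exact HH_to rfl ⟨fun s => (s.2.1, (s.1, s.2.2)), fun s => (s.2.1, (s.1, s.2.2)), fun _ => rfl, fun _ => rfl⟩ (Equiv.refl _) (fun _ _ => rfl)

lemma iid_yze {A B E F : Type} [Fintype A] [DecidableEq A] [Fintype B] [DecidableEq B]
    [Fintype E] [DecidableEq E] [Fintype F] [DecidableEq F] (n : ℕ) {χ : A → B → E → F → ℂ}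
    (hχ : ∑ o : A × (B × (E × F)), χ o.1 o.2.1 o.2.2.1 o.2.2.2 * star (χ o.1 o.2.1 o.2.2.1 o.2.2.2) = 1) :
    HH (fun (s : ((Fin n → A) × ((Fin n → B) × (Fin n → E)))) (t : (Fin n → F)) => ∏ k, χ (s.1 k) (s.2.1 k) (s.2.2 k) (t k)) = n * HH (fun (s : (A × (B × E))) (t : F) => χ s.1 s.2.1 s.2.2 t) := by
  have h1 := HH_iid (fun (s : (A × (B × E))) (t : F) => χ s.1 s.2.1 s.2.2 t) (nrm4 hχ ⟨fun s => (s.1.1, (s.1.2.1, (s.1.2.2, s.2))), fun s => ((s.1, (s.2.1, s.2.2.1)), s.2.2.2), fun _ => rfl, fun _ => rfl⟩ (fun _ _ => rfl)) n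
  exact HH_to h1 ⟨fun s k => ((s.1 k), ((s.2.1 k), (s.2.2 k))), fun s => ((fun k => (s k).1), ((fun k => (s k).2.1), (fun k => (s k).2.2))), fun _ => rfl, fun _ => rfl⟩ (Equiv.refl _) (fun _ _ => rfl)

lemma enc_e {A B E F γA ωA γB ωB : Type} [Fintype A] [DecidableEq A] [Fintype B] [DecidableEq B]
    [Fintype E] [DecidableEq E] [Fintype F] [DecidableEq F] [Fintype γA] [DecidableEq γA]
    [Fintype ωA] [DecidableEq ωA] [Fintype γB] [DecidableEq γB] [Fintype ωB] [DecidableEq ωB]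
    {EA : Matrix (γA × ωA) A ℂ} (hEA : EAᴴ * EA = 1)
    {EB : Matrix (γB × ωB) B ℂ} (hEB : EBᴴ * EB = 1) (ψ : A → B → E → F → ℂ) :
    HH (fun (s : E) (t : (γA × (ωA × (γB × (ωB × F))))) => enc EA EB ψ t.1 t.2.1 t.2.2.1 t.2.2.2.1 s t.2.2.2.2) = HH (fun (s : E) (t : (A × (B × F))) => ψ t.1 t.2.1 s t.2.2) := by
  unfold enc
  have h1 := HH_iso_right hEA (fun (s : E) (t : (A × (γB × (ωB × F)))) => ∑ z, EB (t.2.1, t.2.2.1) z * ψ t.1 z s t.2.2.2)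
  refine Eq.trans (HH_to h1 (Equiv.refl _) ⟨fun s => ((s.1, s.2.1), (s.2.2.1, (s.2.2.2.1, s.2.2.2.2))), fun s => (s.1.1, (s.1.2, (s.2.1, (s.2.2.1, s.2.2.2)))), fun _ => rfl, fun _ => rfl⟩ ?_) ?_
  · intro s t; rfl
  have h2 := HH_iso_right hEB (fun (s : E) (t : (B × (A × F))) => ψ t.2.1 t.1 s t.2.2)
  refine Eq.trans (HH_to h2 (Equiv.refl _) ⟨fun s => ((s.2.1, s.2.2.1), (s.1, s.2.2.2)), fun s => (s.2.1, (s.1.1, (s.1.2, s.2.2))), fun _ => rfl, fun _ => rfl⟩ ?_) ?_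
  · intro s t; rfl
  exact HH_to rfl (Equiv.refl _) ⟨fun s => (s.2.1, (s.1, s.2.2)), fun s => (s.2.1, (s.1, s.2.2)), fun _ => rfl, fun _ => rfl⟩ (fun _ _ => rfl)

lemma iid_e {A B E F : Type} [Fintype A] [DecidableEq A] [Fintype B] [DecidableEq B]
    [Fintype E] [DecidableEq E] [Fintype F] [DecidableEq F] (n : ℕ) {χ : A → B → E → F → ℂ}
    (hχ : ∑ o : A × (B × (E × F)), χ o.1 o.2.1 o.2.2.1 o.2.2.2 * star (χ o.1 o.2.1 o.2.2.1 o.2.2.2) = 1) :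
    HH (fun (s : (Fin n → E)) (t : ((Fin n → A) × ((Fin n → B) × (Fin n → F)))) => ∏ k, χ (t.1 k) (t.2.1 k) (s k) (t.2.2 k)) = n * HH (fun (s : E) (t : (A × (B × F))) => χ t.1 t.2.1 s t.2.2) := by
  have h1 := HH_iid (fun (s : E) (t : (A × (B × F))) => χ t.1 t.2.1 s t.2.2) (nrm4 hχ ⟨fun s => (s.2.1, (s.2.2.1, (s.1, s.2.2.2))), fun s => (s.2.2.1, (s.1, (s.2.1, s.2.2.2))), fun _ => rfl, fun _ => rfl⟩ (fun _ _ => rfl)) n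
  exact HH_to h1 (Equiv.refl _) ⟨fun s k => ((s.1 k), ((s.2.1 k), (s.2.2 k))), fun s => ((fun k => (s k).1), ((fun k => (s k).2.1), (fun k => (s k).2.2))), fun _ => rfl, fun _ => rfl⟩ (fun _ _ => rfl)



noncomputable def fidK {Z W : Type} [Fintype Z] [Fintype W] (K : Z → W → Z → ℂ) (M : Z → Z → ℂ) : ℝ :=
  (∑ w, (∑ z, ∑ z', K z w z' * M z' z) * star (∑ z, ∑ z', K z w z' * M z' z)).re

noncomputable def codeK {A B γA ωA γB ωB ωC : Type} [Fintype γA] [Fintype γB]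
    (EA : Matrix (γA × ωA) A ℂ) (EB : Matrix (γB × ωB) B ℂ)
    (D : Matrix ((A × B) × ωC) (γA × γB) ℂ) (z : A × B) (w : (ωA × ωB) × ωC) (z' : A × B) : ℂ :=
  ∑ cA : γA, ∑ cB : γB, D (z, w.2) (cA, cB) * EA (cA, w.1.1) z'.1 * EB (cB, w.1.2) z'.2

lemma fid_eq {R Z W : Type} [Fintype R] [Fintype Z] [Fintype W] (ψ : Z → R → ℂ)
    (K : Z → W → Z → ℂ) (v : R × Z → ℂ) (hv : ∀ p, v p = ψ p.2 p.1) (fin : R × Z → W → ℂ)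
    (hfin : ∀ g w, fin g w = ∑ z', K g.2 w z' * ψ z' g.1) :
    (star v ⬝ᵥ (rd fin *ᵥ v)).re = fidK K (fun z' z => ∑ r, ψ z' r * star (ψ z r)) := by
  unfold fidK
  congr 1
  have hamp : ∀ w, ∑ z, ∑ z', K z w z' * ∑ r, ψ z' r * star (ψ z r) = ∑ g, star (v g) * fin g w := by
    intro w
    rw [Fintype.sum_prod_type_right]
    refine Finset.sum_congr rfl fun z _ => ?_
    simp only [hfin, hv, Finset.mul_sum]
    rw [Finset.sum_comm]
    refine Finset.sum_congr rfl fun r _ => Finset.sum_congr rfl fun z' _ => ?_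
    ring
  simp only [hamp]
  simp only [dotProduct, mulVec, rd, of_apply, Pi.star_apply, Finset.mul_sum, Finset.sum_mul,
    star_sum, star_mul, star_star]
  rw [Finset.sum_comm' (t' := Finset.univ) (s' := fun _ => Finset.univ) (by simp)]
  conv_lhs => enter [2, x]; rw [Finset.sum_comm]
  rw [Finset.sum_comm]
  refine Finset.sum_congr rfl fun w _ => ?_
  refine Finset.sum_congr rfl fun i _ => Finset.sum_congr rfl fun j _ => ?_
  ring

lemma codeFidelity_eq {ιA ιB ιR : Type} {n : ℕ} {γA ωA γB ωB ωC : Type}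
    [Fintype ιA] [Fintype ιB] [Fintype ιR] [DecidableEq ιR]
    [Fintype γA] [Fintype γB] [Fintype ωA] [Fintype ωB] [Fintype ωC]
    (φ : ιA × (ιB × ιR) → ℂ)
    (EA : Matrix (γA × ωA) (Fin n → ιA) ℂ)
    (EB : Matrix (γB × ωB) (Fin n → ιB) ℂ)
    (D : Matrix (((Fin n → ιA) × (Fin n → ιB)) × ωC) (γA × γB) ℂ) :
    codeFidelity φ EA EB D = fidK (codeK EA EB D)
      (fun z' z => ∏ k, redAB φ (z'.1 k, z'.2 k) (z.1 k, z.2 k)) := by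
  classical
  have h1 : (fun z' z : (Fin n → ιA) × (Fin n → ιB) =>
      ∏ k, redAB φ (z'.1 k, z'.2 k) (z.1 k, z.2 k))
      = fun z' z => ∑ r : Fin n → ιR, iidVec φ n (r, z') * star (iidVec φ n (r, z)) := by
    funext z' z
    simp only [redAB, of_apply, iidVec]
    rw [Finset.prod_univ_sum, Fintype.piFinset_univ]
    refine Finset.sum_congr rfl fun r _ => ?_
    rw [star_prod, Finset.prod_mul_distrib]
  rw [h1, ← fid_eq (fun z r => iidVec φ n (r, z)) (codeK EA EB D) (iidVec φ n) (fun _ => rfl)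
    (fun g w => ∑ z', codeK EA EB D g.2 w z' * iidVec φ n (g.1, z')) (fun _ _ => rfl)]
  unfold codeFidelity
  congr 4
  ext i j
  refine Finset.sum_congr rfl fun w _ => ?_
  beta_reduce
  have h2 : ∀ (g : (Fin n → ιR) × ((Fin n → ιA) × (Fin n → ιB))),
      ∑ z', codeK EA EB D g.2 w z' * iidVec φ n (g.1, z')
       = (codeMap (ιR := ιR) EA EB D *ᵥ iidVec φ n) (g, w) := by
    intro g
    simp only [mulVec, dotProduct, codeMap, of_apply, Fintype.sum_prod_type (γ := ℂ), ite_mul, zero_mul]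
    conv_rhs => rw [Finset.sum_eq_single g.1 (by
      intro b _ hb; simp [hb.symm]) (by simp)]
    simp [codeK]
  rw [h2, h2, mul_vecMulVec, vecMulVec_mul, vecMulVec_apply]
  congr 1
  rw [← star_mulVec]; rfl

noncomputable def dfin {Z E F γA ωA γB ωB ωC : Type} [Fintype γA] [Fintype γB]
    (D : Matrix (Z × ωC) (γA × γB) ℂ) (u : γA → ωA → γB → ωB → E → F → ℂ)
    (w : ωA × ωB) (c : ωC) (r : E × F) (z : Z) : ℂ :=
  ∑ p : γA × γB, D (z, c) p * u p.1 w.1 p.2 w.2 r.1 r.2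

lemma dfin_eq {A B E F γA ωA γB ωB ωC : Type} [Fintype A] [DecidableEq A] [Fintype B]
    [DecidableEq B] [Fintype γA] [Fintype γB]
    (EA : Matrix (γA × ωA) A ℂ) (EB : Matrix (γB × ωB) B ℂ)
    (D : Matrix ((A × B) × ωC) (γA × γB) ℂ) (ψ : A → B → E → F → ℂ)
    (w : ωA × ωB) (c : ωC) (r : E × F) (z : A × B) :
    dfin D (enc EA EB ψ) w c r z = ∑ z' : A × B, codeK EA EB D z (w, c) z' * ψ z'.1 z'.2 r.1 r.2 := by
  unfold dfin codeK enc
  simp only [Finset.mul_sum, Finset.sum_mul, Fintype.sum_prod_type]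
  have hc : ∀ g : γA → γB → A → B → ℂ, ∑ cA, ∑ cB, ∑ y, ∑ b, g cA cB y b
      = ∑ y, ∑ b, ∑ cA, ∑ cB, g cA cB y b := by
    intro g
    calc _ = ∑ cA, ∑ y, ∑ cB, ∑ b, g cA cB y b := Finset.sum_congr rfl fun _ _ => Finset.sum_comm
      _ = ∑ y, ∑ cA, ∑ cB, ∑ b, g cA cB y b := Finset.sum_comm
      _ = ∑ y, ∑ cA, ∑ b, ∑ cB, g cA cB y b :=
        Finset.sum_congr rfl fun _ _ => Finset.sum_congr rfl fun _ _ => Finset.sum_comm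
      _ = _ := Finset.sum_congr rfl fun _ _ => Finset.sum_comm
  rw [hc]
  refine Finset.sum_congr rfl fun y _ => Finset.sum_congr rfl fun b _ =>
    Finset.sum_congr rfl fun cA _ => Finset.sum_congr rfl fun cB _ => ?_
  ring


lemma iso_norm {X Y T : Type} [Fintype X] [Fintype Y] [DecidableEq Y] [Fintype T] {V : Matrix X Y ℂ}
    (hV : Vᴴ * V = 1) (f : Y → T → ℂ) :
    ∑ x, ∑ t, (∑ y, V x y * f y t) * star (∑ y, V x y * f y t) = ∑ y, ∑ t, f y t * star (f y t) := by
  rw [Finset.sum_comm]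
  conv_rhs => rw [Finset.sum_comm]
  exact Finset.sum_congr rfl fun t _ => isom_sum hV _ _

lemma enc_norm {A B E F γA ωA γB ωB : Type} [Fintype A] [DecidableEq A] [Fintype B] [DecidableEq B]
    [Fintype E] [Fintype F] [Fintype γA] [Fintype ωA] [Fintype γB] [Fintype ωB]
    {EA : Matrix (γA × ωA) A ℂ} (hEA : EAᴴ * EA = 1)
    {EB : Matrix (γB × ωB) B ℂ} (hEB : EBᴴ * EB = 1) (ψ : A → B → E → F → ℂ)
    (hψ : ∑ o : A × (B × (E × F)), ψ o.1 o.2.1 o.2.2.1 o.2.2.2 * star (ψ o.1 o.2.1 o.2.2.1 o.2.2.2) = 1) :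
    ∑ o : γA × (ωA × (γB × (ωB × (E × F)))),
      (fun o : γA × (ωA × (γB × (ωB × (E × F)))) =>
        enc EA EB ψ o.1 o.2.1 o.2.2.1 o.2.2.2.1 o.2.2.2.2.1 o.2.2.2.2.2) o *
      star ((fun o : γA × (ωA × (γB × (ωB × (E × F)))) =>
        enc EA EB ψ o.1 o.2.1 o.2.2.1 o.2.2.2.1 o.2.2.2.2.1 o.2.2.2.2.2) o) = 1 := by
  have h1 := iso_norm hEA (fun y (t : (γB × ωB) × (E × F)) => ∑ z, EB t.1 z * ψ y z t.2.1 t.2.2)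
  have h2 : ∀ y, _ := fun y => iso_norm hEB (fun z (t : E × F) => ψ y z t.1 t.2)
  rw [← hψ]
  simp only [Fintype.sum_prod_type] at h1 h2 ⊢
  simp only [h2] at h1
  exact h1

lemma dec_norm {Z E F γA ωA γB ωB ωC : Type} [Fintype Z] [DecidableEq Z]
    [Fintype E] [DecidableEq E] [Fintype F] [DecidableEq F] [Fintype γA] [DecidableEq γA]
    [Fintype ωA] [DecidableEq ωA] [Fintype γB] [DecidableEq γB] [Fintype ωB] [DecidableEq ωB]
    [Fintype ωC] [DecidableEq ωC]
    {D : Matrix (Z × ωC) (γA × γB) ℂ} (hD : Dᴴ * D = 1) (u : γA → ωA → γB → ωB → E → F → ℂ)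
    (hu : ∑ o : γA × (ωA × (γB × (ωB × (E × F)))),
      (fun o : γA × (ωA × (γB × (ωB × (E × F)))) =>
        u o.1 o.2.1 o.2.2.1 o.2.2.2.1 o.2.2.2.2.1 o.2.2.2.2.2) o *
      star ((fun o : γA × (ωA × (γB × (ωB × (E × F)))) =>
        u o.1 o.2.1 o.2.2.1 o.2.2.2.1 o.2.2.2.2.1 o.2.2.2.2.2) o) = 1) :
    ∑ x, ∑ x', ∑ y, ∑ z, dfin D u x x' y z * star (dfin D u x x' y z) = 1 := by
  have h1 := iso_norm hD (fun p (t : (ωA × ωB) × (E × F)) =>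
    u p.1 t.1.1 p.2 t.1.2 t.2.1 t.2.2)
  have h2 : ∑ p : γA × γB, ∑ t : (ωA × ωB) × (E × F),
      u p.1 t.1.1 p.2 t.1.2 t.2.1 t.2.2 *
      star (u p.1 t.1.1 p.2 t.1.2 t.2.1 t.2.2) = 1 := by
    rw [← Fintype.sum_prod_type', ← hu]
    exact Fintype.sum_equiv ⟨fun s => (s.1.1, s.2.1.1, s.1.2, s.2.1.2, s.2.2.1, s.2.2.2),
      fun s => ((s.1, s.2.2.1), (s.2.1, s.2.2.2.1), (s.2.2.2.2.1, s.2.2.2.2.2)),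
      fun _ => rfl, fun _ => rfl⟩ _ _ (fun _ => rfl)
  rw [h2] at h1
  rw [← h1, ← Fintype.sum_prod_type', ← Fintype.sum_prod_type', ← Fintype.sum_prod_type',
    ← Fintype.sum_prod_type']
  exact Fintype.sum_equiv ⟨fun s => ((s.2, s.1.1.2), (s.1.1.1, s.1.2)),
      fun s => (((s.2.1, s.1.2), s.2.2), s.1.1),
      fun _ => rfl, fun _ => rfl⟩ _ _ (fun _ => rfl)

lemma dec_ineq {Z E F γA ωA γB ωB ωC : Type} [Fintype Z] [DecidableEq Z]
    [Fintype E] [DecidableEq E] [Fintype F] [DecidableEq F] [Fintype γA] [DecidableEq γA]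
    [Fintype ωA] [DecidableEq ωA] [Fintype γB] [DecidableEq γB] [Fintype ωB] [DecidableEq ωB]
    [Fintype ωC] [DecidableEq ωC]
    {D : Matrix (Z × ωC) (γA × γB) ℂ} (hD : Dᴴ * D = 1) (u : γA → ωA → γB → ωB → E → F → ℂ)
    (hu : ∑ o : γA × (ωA × (γB × (ωB × (E × F)))),
      (fun o : γA × (ωA × (γB × (ωB × (E × F)))) =>
        u o.1 o.2.1 o.2.2.1 o.2.2.2.1 o.2.2.2.2.1 o.2.2.2.2.2) o *
      star ((fun o : γA × (ωA × (γB × (ωB × (E × F)))) =>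
        u o.1 o.2.1 o.2.2.1 o.2.2.2.1 o.2.2.2.2.1 o.2.2.2.2.2) o) = 1) (h : ℝ)
    (hh : HH (fun (s : (ωA × ωB) × ωC) (t : (E × F) × Z) => dfin D u s.1 s.2 t.1 t.2) = h) :
    HH (fun (s : (ωA × ωB)) (t : (γA × (γB × (E × F)))) =>
      u t.1 s.1 t.2.1 s.2 t.2.2.1 t.2.2.2)
    + HH (fun (s : (E × F)) (t : (γA × (ωA × (γB × ωB)))) =>
      u t.1 t.2.1 t.2.2.1 t.2.2.2 s.1 s.2)
    ≤ HH (fun (s : (ωA × (ωB × (E × F)))) (t : (γA × γB)) =>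
      u t.1 s.1 t.2 s.2.1 s.2.2.1 s.2.2.2) + 2 * h := by
  exact L_dec (dfin D u) (dec_norm hD u hu)
    (rx := HH (fun (s : (ωA × ωB)) (t : (γA × (γB × (E × F)))) =>
      u t.1 s.1 t.2.1 s.2 t.2.2.1 t.2.2.2))
    (ry := HH (fun (s : (E × F)) (t : (γA × (ωA × (γB × ωB)))) =>
      u t.1 t.2.1 t.2.2.1 t.2.2.2 s.1 s.2))
    (rxy := HH (fun (s : (ωA × (ωB × (E × F)))) (t : (γA × γB)) =>
      u t.1 s.1 t.2 s.2.1 s.2.2.1 s.2.2.2))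
    (by
      have h1 := HH_iso_right hD (fun (s : ωA × ωB) (t : (γA × γB) × (E × F)) =>
        u t.1.1 s.1 t.1.2 s.2 t.2.1 t.2.2)
      refine Eq.trans (HH_to h1 (Equiv.refl _) ⟨fun s => ((s.2.2, s.1), s.2.1),
        fun s => (s.1.2, s.2, s.1.1), fun _ => rfl, fun _ => rfl⟩ ?_) ?_
      · intro s t; rfl
      · exact HH_to rfl (Equiv.refl _) ⟨fun s => (s.1.1, s.1.2, s.2), fun s => ((s.1, s.2.1), s.2.2),
          fun _ => rfl, fun _ => rfl⟩ (fun _ _ => rfl))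
    (by
      have h1 := HH_iso_right hD (fun (s : E × F) (t : (γA × γB) × (ωA × ωB)) =>
        u t.1.1 t.2.1 t.1.2 t.2.2 s.1 s.2)
      refine Eq.trans (HH_to h1 (Equiv.refl _) ⟨fun s => ((s.2, s.1.2), s.1.1),
        fun s => ((s.2, s.1.2), s.1.1), fun _ => rfl, fun _ => rfl⟩ ?_) ?_
      · intro s t; rfl
      · exact HH_to rfl (Equiv.refl _) ⟨fun s => (s.1.1, s.2.1, s.1.2, s.2.2),
          fun s => ((s.1, s.2.2.1), (s.2.1, s.2.2.2)),
          fun _ => rfl, fun _ => rfl⟩ (fun _ _ => rfl))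
    (by
      have h1 := HH_iso_right hD (fun (s : (ωA × ωB) × (E × F)) (t : (γA × γB) × Unit) =>
        u t.1.1 s.1.1 t.1.2 s.1.2 s.2.1 s.2.2)
      refine Eq.trans (HH_to h1 (Equiv.refl _) ⟨fun s => ((s.2, s.1), ()),
        fun s => (s.1.2, s.1.1), fun _ => rfl, fun _ => rfl⟩ ?_) ?_
      · intro s t; rfl
      · exact HH_to rfl ⟨fun s => (s.1.1, s.1.2, s.2), fun s => ((s.1, s.2.1), s.2.2),
          fun _ => rfl, fun _ => rfl⟩ ⟨fun s => s.1, fun s => (s, ()),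
          fun _ => rfl, fun _ => rfl⟩ (fun _ _ => rfl))
    hh

lemma le_a {E F γA ωA γB ωB : Type}
    [Fintype E] [DecidableEq E] [Fintype F] [DecidableEq F] [Fintype γA] [DecidableEq γA]
    [Fintype ωA] [DecidableEq ωA] [Fintype γB] [DecidableEq γB] [Fintype ωB] [DecidableEq ωB]
    (u : γA → ωA → γB → ωB → E → F → ℂ)
    (hu : ∑ o : γA × (ωA × (γB × (ωB × (E × F)))),
      (fun o : γA × (ωA × (γB × (ωB × (E × F)))) =>
        u o.1 o.2.1 o.2.2.1 o.2.2.2.1 o.2.2.2.2.1 o.2.2.2.2.2) o *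
      star ((fun o : γA × (ωA × (γB × (ωB × (E × F)))) =>
        u o.1 o.2.1 o.2.2.1 o.2.2.2.1 o.2.2.2.2.1 o.2.2.2.2.2) o) = 1) :
    HH (fun (s : γA) (t : (ωA × (γB × (ωB × (E × F))))) =>
      u s t.1 t.2.1 t.2.2.1 t.2.2.2.1 t.2.2.2.2) ≤ Real.logb 2 (Fintype.card γA) := by
  refine HH_le_log _ ?_
  rw [← Fintype.sum_prod_type', ← hu]

lemma le_b {E F γA ωA γB ωB : Type}
    [Fintype E] [DecidableEq E] [Fintype F] [DecidableEq F] [Fintype γA] [DecidableEq γA]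
    [Fintype ωA] [DecidableEq ωA] [Fintype γB] [DecidableEq γB] [Fintype ωB] [DecidableEq ωB]
    (u : γA → ωA → γB → ωB → E → F → ℂ)
    (hu : ∑ o : γA × (ωA × (γB × (ωB × (E × F)))),
      (fun o : γA × (ωA × (γB × (ωB × (E × F)))) =>
        u o.1 o.2.1 o.2.2.1 o.2.2.2.1 o.2.2.2.2.1 o.2.2.2.2.2) o *
      star ((fun o : γA × (ωA × (γB × (ωB × (E × F)))) =>
        u o.1 o.2.1 o.2.2.1 o.2.2.2.1 o.2.2.2.2.1 o.2.2.2.2.2) o) = 1) :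
    HH (fun (s : γB) (t : (γA × (ωA × (ωB × (E × F))))) =>
      u t.1 t.2.1 s t.2.2.1 t.2.2.2.1 t.2.2.2.2) ≤ Real.logb 2 (Fintype.card γB) := by
  refine HH_le_log _ ?_
  rw [← Fintype.sum_prod_type', ← hu]
  exact Fintype.sum_equiv ⟨fun s => (s.2.1, s.2.2.1, s.1, s.2.2.2),
        fun s => (s.2.2.1, s.1, s.2.1, s.2.2.2), fun _ => rfl, fun _ => rfl⟩ _ _ (fun _ => rfl)

lemma ncore {A B E F γA ωA γB ωB ωC : Type} [Fintype A] [DecidableEq A] [Fintype B] [DecidableEq B]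
    [Fintype E] [DecidableEq E] [Fintype F] [DecidableEq F] [Fintype γA] [DecidableEq γA]
    [Fintype ωA] [DecidableEq ωA] [Fintype γB] [DecidableEq γB] [Fintype ωB] [DecidableEq ωB]
    [Fintype ωC] [DecidableEq ωC]
    {EA : Matrix (γA × ωA) A ℂ} (hEA : EAᴴ * EA = 1)
    {EB : Matrix (γB × ωB) B ℂ} (hEB : EBᴴ * EB = 1)
    {D : Matrix ((A × B) × ωC) (γA × γB) ℂ} (hD : Dᴴ * D = 1) (ψ : A → B → E → F → ℂ)
    (hψ : ∑ o : A × (B × (E × F)), ψ o.1 o.2.1 o.2.2.1 o.2.2.2 * star (ψ o.1 o.2.1 o.2.2.1 o.2.2.2) = 1)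
    (ε : ℝ) (hF : 1 - ε ≤ fidK (codeK EA EB D)
      (fun z' z => ∑ r : E × F, ψ z'.1 z'.2 r.1 r.2 * star (ψ z.1 z.2 r.1 r.2))) :
    (HH (fun (s : A) (t : (B × (E × F))) => ψ s t.1 t.2.1 t.2.2)
      + HH (fun (s : (E × F)) (t : (A × B)) => ψ t.1 t.2 s.1 s.2)
      - HH (fun (s : (A × (E × F))) (t : B) => ψ s.1 t s.2.1 s.2.2)
      ≤ 2 * Real.logb 2 (Fintype.card γA)
        + 2 * (1 + ε * Real.logb 2 (Fintype.card ((E × F) × (A × B))))) ∧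
    (HH (fun (s : B) (t : (A × (E × F))) => ψ t.1 s t.2.1 t.2.2)
      + HH (fun (s : (E × F)) (t : (A × B)) => ψ t.1 t.2 s.1 s.2)
      - HH (fun (s : (B × (E × F))) (t : A) => ψ t s.1 s.2.1 s.2.2)
      ≤ 2 * Real.logb 2 (Fintype.card γB)
        + 2 * (1 + ε * Real.logb 2 (Fintype.card ((E × F) × (A × B))))) ∧
    (HH (fun (s : A) (t : (B × (E × F))) => ψ s t.1 t.2.1 t.2.2)
      + HH (fun (s : B) (t : (A × (E × F))) => ψ t.1 s t.2.1 t.2.2)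
      + HH (fun (s : (E × F)) (t : (A × B)) => ψ t.1 t.2 s.1 s.2)
      - (HH (fun (s : (A × E)) (t : (B × F)) => ψ s.1 t.1 s.2 t.2)
        + HH (fun (s : (B × E)) (t : (A × F)) => ψ t.1 s.1 s.2 t.2)
        - HH (fun (s : (A × (B × E))) (t : F) => ψ s.1 s.2.1 s.2.2 t)
        - HH (fun (s : E) (t : (A × (B × F))) => ψ t.1 t.2.1 s t.2.2))
      - 6 * (1 + ε * Real.logb 2 (Fintype.card ((E × F) × (A × B))))
      ≤ 2 * (Real.logb 2 (Fintype.card γA) + Real.logb 2 (Fintype.card γB))) := by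
  have hu := enc_norm hEA hEB ψ hψ
  have hfn := dec_norm hD _ hu
  obtain ⟨h, hh⟩ : ∃ r, HH (fun (s : (ωA × ωB) × ωC) (t : (E × F) × (A × B)) =>
    dfin D (enc EA EB ψ) s.1 s.2 t.1 t.2) = r := ⟨_, rfl⟩
  have hfan : h ≤ 1 + ε * Real.logb 2 (Fintype.card ((E × F) × (A × B))) := by
    rw [← hh, HH_swap]
    refine HH_fano _ ?_ (fun p => ψ p.2.1 p.2.2 p.1.1 p.1.2) ?_ ε ?_
    · rw [Finset.sum_comm, ← hfn, Fintype.sum_prod_type]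
      simp only [← Fintype.sum_prod_type']
    · rw [← hψ]
      simp only [dotProduct, Pi.star_apply]
      refine Fintype.sum_equiv ⟨fun s => (s.2.1, s.2.2, s.1.1, s.1.2),
        fun s => ((s.2.2.1, s.2.2.2), (s.1, s.2.1)), fun _ => rfl, fun _ => rfl⟩ _ _
        (fun _ => ?_)
      exact mul_comm _ _
    · rw [fid_eq (fun (z : A × B) (r : E × F) => ψ z.1 z.2 r.1 r.2) (codeK EA EB D) _ (fun _ => rfl)]
      · exact hF
      · intro g w; exact dfin_eq EA EB D ψ w.1 w.2 g.1 g.2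
  have hdec := dec_ineq hD _ hu h hh
  obtain ⟨c1, c2, c3⟩ := core (enc EA EB ψ) h hu hdec
  rw [enc_aw hEA hEB, enc_ef hEA hEB, enc_awef hEA hEB] at c1
  rw [enc_bx hEA hEB, enc_ef hEA hEB, enc_bxef hEA hEB] at c2
  rw [enc_aw hEA hEB, enc_bx hEA hEB, enc_ef hEA hEB, enc_awe hEA hEB, enc_bxe hEA hEB,
    enc_awbxe hEA hEB, enc_e hEA hEB] at c3
  have la := le_a _ hu
  have lb := le_b _ hu
  refine ⟨?_, ?_, ?_⟩ <;> linarith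


lemma limit_aux (I Q c L : ℝ) (hc : 0 < c) (hL : 0 ≤ L)
    (h : ∀ ε : ℝ, 0 < ε → ∃ N : ℕ, ∀ n : ℕ, N ≤ n → n * I ≤ n * Q + c * (1 + ε * (n * L))) :
    I ≤ Q := by
  by_contra hlt
  push Not at hlt
  have hδ : 0 < I - Q := by linarith
  obtain ⟨N, hN⟩ := h ((I - Q) / (2 * c * (L + 1))) (by positivity)
  obtain ⟨m, hm⟩ := exists_nat_gt (2 * c / (I - Q))
  have h1 := hN (max N m) (le_max_left _ _)
  have h2 : (m : ℝ) ≤ ((max N m : ℕ) : ℝ) := by exact_mod_cast le_max_right _ _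
  generalize ((max N m : ℕ) : ℝ) = x at h1 h2
  have hx : 2 * c / (I - Q) < x := lt_of_lt_of_le hm h2
  rw [div_lt_iff₀ hδ] at hx
  have hx0 : 0 < x := lt_of_le_of_lt (by positivity) (lt_of_lt_of_le hm h2)
  have h3 : c * ((I - Q) / (2 * c * (L + 1)) * (x * L)) ≤ x * (I - Q) / 2 := by
    have : c * ((I - Q) / (2 * c * (L + 1)) * (x * L)) = x * (I - Q) / 2 * (L / (L + 1)) := by
      field_simp
    rw [this]
    refine mul_le_of_le_one_right (by positivity) ?_
    rw [div_le_one (by positivity)]; linarith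
  linarith

lemma gram_iid {A B E F : Type} [Fintype E] [Fintype F] (χ : A → B → E → F → ℂ) (n : ℕ)
    (a : Fin n → A) (b : Fin n → B) (a' : Fin n → A) (b' : Fin n → B) :
    ∏ k, ∑ r : E × F, χ (a k) (b k) r.1 r.2 * star (χ (a' k) (b' k) r.1 r.2) =
    ∑ r : (Fin n → E) × (Fin n → F), (∏ k, χ (a k) (b k) (r.1 k) (r.2 k)) *
      star (∏ k, χ (a' k) (b' k) (r.1 k) (r.2 k)) := by
  classical
  rw [Finset.prod_univ_sum, Fintype.piFinset_univ]
  refine Fintype.sum_equiv (Equiv.arrowProdEquivProdArrow (Fin n) (fun _ => E) (fun _ => F)) _ _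
    (fun s => ?_)
  rw [star_prod, Finset.prod_mul_distrib]
  simp only [Equiv.arrowProdEquivProdArrow]
  rfl

lemma nbound {ιA ιB ιR E F : Type} [Fintype ιA] [DecidableEq ιA] [Fintype ιB] [DecidableEq ιB]
    [Fintype ιR] [DecidableEq ιR] [Fintype E] [DecidableEq E] [Fintype F] [DecidableEq F]
    (φ : ιA × (ιB × ιR) → ℂ) (χ : ιA → ιB → E → F → ℂ)
    (hχ : ∑ o : ιA × (ιB × (E × F)), χ o.1 o.2.1 o.2.2.1 o.2.2.2 * star (χ o.1 o.2.1 o.2.2.1 o.2.2.2) = 1)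
    (hred : ∀ p q, redAB φ p q = ∑ r : E × F, χ p.1 p.2 r.1 r.2 * star (χ q.1 q.2 r.1 r.2))
    {QA QB : ℝ} (hach : achievable φ QA QB) :
    (HH (fun (s : ιA) (t : (ιB × (E × F))) => χ s t.1 t.2.1 t.2.2)
      + HH (fun (s : (E × F)) (t : (ιA × ιB)) => χ t.1 t.2 s.1 s.2)
      - HH (fun (s : (ιA × (E × F))) (t : ιB) => χ s.1 t s.2.1 s.2.2) ≤ 2 * QA) ∧
    (HH (fun (s : ιB) (t : (ιA × (E × F))) => χ t.1 s t.2.1 t.2.2)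
      + HH (fun (s : (E × F)) (t : (ιA × ιB)) => χ t.1 t.2 s.1 s.2)
      - HH (fun (s : (ιB × (E × F))) (t : ιA) => χ t s.1 s.2.1 s.2.2) ≤ 2 * QB) ∧
    (HH (fun (s : ιA) (t : (ιB × (E × F))) => χ s t.1 t.2.1 t.2.2)
      + HH (fun (s : ιB) (t : (ιA × (E × F))) => χ t.1 s t.2.1 t.2.2)
      + HH (fun (s : (E × F)) (t : (ιA × ιB)) => χ t.1 t.2 s.1 s.2)
      - (HH (fun (s : (ιA × E)) (t : (ιB × F)) => χ s.1 t.1 s.2 t.2)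
        + HH (fun (s : (ιB × E)) (t : (ιA × F)) => χ t.1 s.1 s.2 t.2)
        - HH (fun (s : (ιA × (ιB × E))) (t : F) => χ s.1 s.2.1 s.2.2 t)
        - HH (fun (s : E) (t : (ιA × (ιB × F))) => χ t.1 t.2.1 s t.2.2))
      ≤ 2 * (QA + QB)) := by
  have hL : 0 ≤ Real.logb 2 (Fintype.card ((E × F) × (ιA × ιB)) : ℝ) := by
    rcases Nat.eq_zero_or_pos (Fintype.card ((E × F) × (ιA × ιB))) with h | h
    · rw [h]; simp
    · exact Real.logb_nonneg (by norm_num) (by exact_mod_cast h)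
  have key : ∀ ε : ℝ, 0 < ε → ∃ N : ℕ, ∀ n : ℕ, N ≤ n →
      (n * (HH (fun (s : ιA) (t : (ιB × (E × F))) => χ s t.1 t.2.1 t.2.2)
      + HH (fun (s : (E × F)) (t : (ιA × ιB)) => χ t.1 t.2 s.1 s.2)
      - HH (fun (s : (ιA × (E × F))) (t : ιB) => χ s.1 t s.2.1 s.2.2)) ≤ n * (2 * QA) +
        2 * (1 + ε * (n * Real.logb 2 (Fintype.card ((E × F) × (ιA × ιB)) : ℝ)))) ∧
      (n * (HH (fun (s : ιB) (t : (ιA × (E × F))) => χ t.1 s t.2.1 t.2.2)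
      + HH (fun (s : (E × F)) (t : (ιA × ιB)) => χ t.1 t.2 s.1 s.2)
      - HH (fun (s : (ιB × (E × F))) (t : ιA) => χ t s.1 s.2.1 s.2.2)) ≤ n * (2 * QB) +
        2 * (1 + ε * (n * Real.logb 2 (Fintype.card ((E × F) × (ιA × ιB)) : ℝ)))) ∧
      (n * (HH (fun (s : ιA) (t : (ιB × (E × F))) => χ s t.1 t.2.1 t.2.2)
      + HH (fun (s : ιB) (t : (ιA × (E × F))) => χ t.1 s t.2.1 t.2.2)
      + HH (fun (s : (E × F)) (t : (ιA × ιB)) => χ t.1 t.2 s.1 s.2)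
      - (HH (fun (s : (ιA × E)) (t : (ιB × F)) => χ s.1 t.1 s.2 t.2)
        + HH (fun (s : (ιB × E)) (t : (ιA × F)) => χ t.1 s.1 s.2 t.2)
        - HH (fun (s : (ιA × (ιB × E))) (t : F) => χ s.1 s.2.1 s.2.2 t)
        - HH (fun (s : E) (t : (ιA × (ιB × F))) => χ t.1 t.2.1 s t.2.2))) ≤ n * (2 * (QA + QB)) +
        6 * (1 + ε * (n * Real.logb 2 (Fintype.card ((E × F) × (ιA × ιB)) : ℝ)))) := by
    intro ε hε
    obtain ⟨N, hN⟩ := hach ε hε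
    refine ⟨N, fun n hn => ?_⟩
    obtain ⟨dCA, dWA, dCB, dWB, dWC, EA, EB, D, hEA, hEB, hD, hA, hB, hF⟩ := hN n hn
    obtain ⟨ψ, hψd⟩ : ∃ ψ : (Fin n → ιA) → (Fin n → ιB) → (Fin n → E) → (Fin n → F) → ℂ,
      ψ = fun a b e f => ∏ k, χ (a k) (b k) (e k) (f k) := ⟨_, rfl⟩
    have hψ : ∑ o : (Fin n → ιA) × ((Fin n → ιB) × ((Fin n → E) × (Fin n → F))),
        ψ o.1 o.2.1 o.2.2.1 o.2.2.2 *
        star (ψ o.1 o.2.1 o.2.2.1 o.2.2.2) = 1 := by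
      rw [hψd, ← iid_norm (fun o : ιA × (ιB × (E × F)) => χ o.1 o.2.1 o.2.2.1 o.2.2.2) hχ n]
      exact Fintype.sum_equiv ⟨fun s k => (s.1 k, s.2.1 k, s.2.2.1 k, s.2.2.2 k),
        fun s => (fun k => (s k).1, fun k => (s k).2.1, fun k => (s k).2.2.1, fun k => (s k).2.2.2),
        fun _ => rfl, fun _ => rfl⟩ _ _ (fun _ => rfl)
    have hM : (fun z' z : (Fin n → ιA) × (Fin n → ιB) =>
        ∏ k, redAB φ (z'.1 k, z'.2 k) (z.1 k, z.2 k)) =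
        (fun z' z => ∑ r : (Fin n → E) × (Fin n → F),
          ψ z'.1 z'.2 r.1 r.2 *
          star (ψ z.1 z.2 r.1 r.2)) := by
      funext z' z
      simp only [hred, hψd]
      exact gram_iid χ n z'.1 z'.2 z.1 z.2
    rw [codeFidelity_eq, hM] at hF
    obtain ⟨c1, c2, c3⟩ := ncore hEA hEB hD ψ hψ ε hF
    have hcard : Real.logb 2 (Fintype.card (((Fin n → E) × (Fin n → F)) ×
        ((Fin n → ιA) × (Fin n → ιB))) : ℝ) =
        n * Real.logb 2 (Fintype.card ((E × F) × (ιA × ιB)) : ℝ) := by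
      rw [← Real.logb_pow]
      congr 1
      simp only [Fintype.card_prod, Fintype.card_fun, Fintype.card_fin]
      push_cast; ring
    rw [hcard] at c1 c2 c3
    simp only [hψd] at c1 c2 c3
    rw [iid_y n hχ, iid_ef n hχ, iid_yef n hχ] at c1
    rw [iid_z n hχ, iid_ef n hχ, iid_zef n hχ] at c2
    rw [iid_y n hχ, iid_z n hχ, iid_ef n hχ, iid_ye n hχ, iid_ze n hχ, iid_yze n hχ,
      iid_e n hχ] at c3
    simp only [Fintype.card_fin] at c1 c2 c3
    refine ⟨?_, ?_, ?_⟩ <;> linarith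
  refine ⟨limit_aux _ _ 2 _ (by norm_num) hL fun ε hε => ?_,
    limit_aux _ _ 2 _ (by norm_num) hL fun ε hε => ?_,
    limit_aux _ _ 6 _ (by norm_num) hL fun ε hε => ?_⟩ <;> obtain ⟨N, hN⟩ := key ε hε
  · exact ⟨N, fun n hn => (hN n hn).1⟩
  · exact ⟨N, fun n hn => (hN n hn).2.1⟩
  · exact ⟨N, fun n hn => (hN n hn).2.2⟩

lemma psd_factor {n : Type} [Fintype n] [DecidableEq n] {M : Matrix n n ℂ} (h : M.PosSemidef) :
    ∃ C : Matrix n n ℂ, M = Cᴴ * C := by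
  obtain ⟨U, -, -, e⟩ := eigen_decomp h.1
  refine ⟨diagonal (fun i => ((Real.sqrt (h.1.eigenvalues i) : ℝ) : ℂ)) * Uᴴ, ?_⟩
  have hd : ((diagonal (fun i => ((Real.sqrt (h.1.eigenvalues i) : ℝ) : ℂ)))ᴴ : Matrix n n ℂ)
      * diagonal (fun i => ((Real.sqrt (h.1.eigenvalues i) : ℝ) : ℂ))
      = diagonal (fun i => (h.1.eigenvalues i : ℂ)) := by
    rw [diagonal_conjTranspose, diagonal_mul_diagonal]
    congr 1; funext i
    simp only [Pi.star_apply, RCLike.star_def, Complex.conj_ofReal]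
    rw [← Complex.ofReal_mul, Real.mul_self_sqrt (h.eigenvalues_nonneg i)]
  rw [conjTranspose_mul, conjTranspose_conjTranspose, Matrix.mul_assoc,
    ← Matrix.mul_assoc _ (diagonal _) Uᴴ, hd, ← Matrix.mul_assoc]
  exact e

lemma bound3 {ιA ιB ιR : Type} [Fintype ιA] [DecidableEq ιA] [Fintype ιB] [DecidableEq ιB]
    [Fintype ιR] [DecidableEq ιR] (φ : ιA × (ιB × ιR) → ℂ) {QA QB : ℝ}
    (hach : achievable φ QA QB) (dE : ℕ)
    (ρ : Matrix ((ιA × ιB) × Fin dE) ((ιA × ιB) × Fin dE) ℂ)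
    (hρ : ρ.PosSemidef) (htr : ρ.trace = 1)
    (hext : ∀ i j : ιA × ιB, (∑ e : Fin dE, ρ (i, e) (j, e)) = redAB φ i j) :
    vnEntropy (redA φ) + vnEntropy (redB φ) + vnEntropy (redAB φ)
      - (vnEntropy (extRedAE ρ) + vnEntropy (extRedBE ρ) - vnEntropy ρ - vnEntropy (extRedE ρ))
      ≤ 2 * (QA + QB) := by
  obtain ⟨C, hC⟩ := psd_factor hρ
  obtain ⟨χ, hχd⟩ : ∃ χ : ιA → ιB → Fin dE → ((ιA × ιB) × Fin dE) → ℂ,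
    ∀ a b e f, χ a b e f = star (C f ((a, b), e)) := ⟨_, fun _ _ _ _ => rfl⟩
  have hρe : ∀ a b e a' b' e', ρ ((a, b), e) ((a', b'), e')
      = ∑ f, χ a b e f * star (χ a' b' e' f) := by
    intro a b e a' b' e'
    rw [hC]
    simp [Matrix.mul_apply, hχd]
  have hred : ∀ p q, redAB φ p q =
      ∑ r : Fin dE × ((ιA × ιB) × Fin dE), χ p.1 p.2 r.1 r.2 * star (χ q.1 q.2 r.1 r.2) := by
    intro p q
    rw [← hext, Fintype.sum_prod_type (γ := ℂ)]
    exact Finset.sum_congr rfl fun e _ => hρe _ _ _ _ _ _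
  have hχ : ∑ o : ιA × (ιB × (Fin dE × ((ιA × ιB) × Fin dE))),
      χ o.1 o.2.1 o.2.2.1 o.2.2.2 * star (χ o.1 o.2.1 o.2.2.1 o.2.2.2) = 1 := by
    rw [← htr]
    simp only [Matrix.trace, diag_apply]
    rw [Fintype.sum_prod_type, Fintype.sum_prod_type (γ := ℂ), Fintype.sum_prod_type (γ := ℂ)]
    refine Finset.sum_congr rfl fun a _ => ?_
    rw [Fintype.sum_prod_type]
    refine Finset.sum_congr rfl fun b _ => ?_
    rw [Fintype.sum_prod_type]
    exact Finset.sum_congr rfl fun e _ => (hρe _ _ _ _ _ _).symm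
  obtain ⟨-, -, h3⟩ := nbound φ χ hχ hred hach
  have eA : redA φ = rd (fun (s : ιA) (t : (ιB × (Fin dE × ((ιA × ιB) × Fin dE)))) =>
      χ s t.1 t.2.1 t.2.2) := by
    ext a a'
    have : redA φ a a' = ∑ b, redAB φ (a, b) (a', b) := by
      simp only [redA, redAB, of_apply]; rw [Fintype.sum_prod_type (γ := ℂ)]
    rw [this]
    simp only [rd, of_apply, hred]
    rw [Fintype.sum_prod_type (γ := ℂ)]
  have eB : redB φ = rd (fun (s : ιB) (t : (ιA × (Fin dE × ((ιA × ιB) × Fin dE)))) =>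
      χ t.1 s t.2.1 t.2.2) := by
    ext a a'
    have : redB φ a a' = ∑ b, redAB φ (b, a) (b, a') := by
      simp only [redB, redAB, of_apply]
    rw [this]
    simp only [rd, of_apply, hred]
    rw [Fintype.sum_prod_type (γ := ℂ)]
  have eAB : redAB φ = rd (fun (s : ιA × ιB) (t : Fin dE × ((ιA × ιB) × Fin dE)) =>
      χ s.1 s.2 t.1 t.2) := by
    ext p q
    rw [hred]; rfl
  have eAE : extRedAE ρ = rd (fun (s : (ιA × Fin dE)) (t : (ιB × ((ιA × ιB) × Fin dE))) =>
      χ s.1 t.1 s.2 t.2) := by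
    ext p q
    simp only [extRedAE, rd, of_apply, hρe]
    rw [Fintype.sum_prod_type (γ := ℂ)]
  have eBE : extRedBE ρ = rd (fun (s : (ιB × Fin dE)) (t : (ιA × ((ιA × ιB) × Fin dE))) =>
      χ t.1 s.1 s.2 t.2) := by
    ext p q
    simp only [extRedBE, rd, of_apply, hρe]
    rw [Fintype.sum_prod_type (γ := ℂ)]
  have eE : extRedE ρ = rd (fun (s : Fin dE) (t : (ιA × (ιB × ((ιA × ιB) × Fin dE)))) =>
      χ t.1 t.2.1 s t.2.2) := by
    ext p q
    simp only [extRedE, rd, of_apply]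
    rw [Fintype.sum_prod_type (γ := ℂ), Fintype.sum_prod_type (γ := ℂ)]
    refine Finset.sum_congr rfl fun a _ => ?_
    rw [Fintype.sum_prod_type (γ := ℂ)]
    exact Finset.sum_congr rfl fun b _ => hρe _ _ _ _ _ _
  have eρ : ρ = rd (fun (s : (ιA × ιB) × Fin dE) (t : (ιA × ιB) × Fin dE) =>
      χ s.1.1 s.1.2 s.2 t) := by
    ext p q
    exact hρe _ _ _ _ _ _
  have eABE : vnEntropy ρ = HH (fun (s : (ιA × (ιB × Fin dE))) (t : (ιA × ιB) × Fin dE) =>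
      χ s.1 s.2.1 s.2.2 t) := by
    rw [eρ]
    exact HH_to rfl (Equiv.prodAssoc _ _ _) (Equiv.refl _) (fun _ _ => rfl)
  have eAB' : vnEntropy (redAB φ) = HH (fun (s : Fin dE × ((ιA × ιB) × Fin dE)) (t : ιA × ιB) =>
      χ t.1 t.2 s.1 s.2) := by
    rw [eAB]; exact HH_swap _
  rw [eABE, eAB', eA, eB, eAE, eBE, eE]
  unfold HH at h3 ⊢
  linarith

/-- **Theorem 6: outer bound for fully quantum distributed compression.**  If a rate pair
`(Q_A, Q_B)` of nonnegative reals is achievable for the source `φ^{ABR}`, then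
`Q_A ≥ ½I(A;R)`, `Q_B ≥ ½I(B;R)` and `Q_A + Q_B ≥ ½J(A;B) − E_sq(φ^{AB})`, where
`J(A;B) = H(A) + H(B) + H(AB)`. -/
theorem distributed_compression_outer_bound
    {ιA ιB ιR : Type} [Fintype ιA] [DecidableEq ιA] [Fintype ιB] [DecidableEq ιB]
    [Fintype ιR] [DecidableEq ιR]
    (φ : ιA × (ιB × ιR) → ℂ) (hφ : star φ ⬝ᵥ φ = 1)
    (QA QB : ℝ) (hQA0 : 0 ≤ QA) (hQB0 : 0 ≤ QB)
    (hach : achievable φ QA QB) :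
    QA ≥ (1/2) * (vnEntropy (redA φ) + vnEntropy (redR φ) - vnEntropy (redAR φ))
    ∧ QB ≥ (1/2) * (vnEntropy (redB φ) + vnEntropy (redR φ) - vnEntropy (redBR φ))
    ∧ QA + QB ≥
        (1/2) * (vnEntropy (redA φ) + vnEntropy (redB φ) + vnEntropy (redAB φ))
          - squashedEntanglement (redAB φ) := by
  have hnorm : ∑ o : ιA × (ιB × (ιR × Unit)), φ (o.1, (o.2.1, o.2.2.1)) *
      star (φ (o.1, (o.2.1, o.2.2.1))) = 1 := by
    rw [← hφ]
    simp only [dotProduct, Pi.star_apply]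
    refine Fintype.sum_equiv ⟨fun s => (s.1, s.2.1, s.2.2.1), fun s => (s.1, s.2.1, s.2.2, ()),
      fun _ => rfl, fun _ => rfl⟩ _ _ (fun _ => ?_)
    exact mul_comm _ _
  obtain ⟨h1, h2, -⟩ := nbound φ (fun a b r (_ : Unit) => φ (a, (b, r))) hnorm (by
    intro p q
    rw [Fintype.sum_prod_type (γ := ℂ)]
    simp [redAB]) hach
  have eA : vnEntropy (redA φ) = HH (fun (s : ιA) (t : ιB × (ιR × Unit)) => φ (s, (t.1, t.2.1))) := by
    have h : redA φ = rd (fun (s : ιA) (t : ιB × ιR) => φ (s, t)) := rfl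
    rw [h]
    exact HH_to rfl (Equiv.refl _) ⟨fun s => (s.1, s.2, ()), fun s => (s.1, s.2.1),
      fun _ => rfl, fun _ => rfl⟩ (fun _ _ => rfl)
  have eB : vnEntropy (redB φ) = HH (fun (s : ιB) (t : ιA × (ιR × Unit)) => φ (t.1, (s, t.2.1))) := by
    have h : redB φ = rd (fun (s : ιB) (t : ιA × ιR) => φ (t.1, (s, t.2))) := by
      ext b b'
      simp only [redB, rd, of_apply]
      rw [Fintype.sum_prod_type (γ := ℂ)]
    rw [h]
    exact HH_to rfl (Equiv.refl _) ⟨fun s => (s.1, s.2, ()), fun s => (s.1, s.2.1),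
      fun _ => rfl, fun _ => rfl⟩ (fun _ _ => rfl)
  have eR : vnEntropy (redR φ) = HH (fun (s : ιR × Unit) (t : ιA × ιB) => φ (t.1, (t.2, s.1))) := by
    have h : redR φ = rd (fun (s : ιR) (t : ιA × ιB) => φ (t.1, (t.2, s))) := by
      ext b b'
      simp only [redR, rd, of_apply]
      rw [Fintype.sum_prod_type (γ := ℂ)]
    rw [h]
    exact HH_to rfl ⟨fun s => (s, ()), fun s => s.1,
      fun _ => rfl, fun _ => rfl⟩ (Equiv.refl _) (fun _ _ => rfl)
  have eAR : vnEntropy (redAR φ) =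
      HH (fun (s : ιA × (ιR × Unit)) (t : ιB) => φ (s.1, (t, s.2.1))) := by
    have h : redAR φ = rd (fun (s : ιA × ιR) (t : ιB) => φ (s.1, (t, s.2))) := rfl
    rw [h]
    exact HH_to rfl ⟨fun s => (s.1, s.2, ()), fun s => (s.1, s.2.1),
      fun _ => rfl, fun _ => rfl⟩ (Equiv.refl _) (fun _ _ => rfl)
  have eBR : vnEntropy (redBR φ) =
      HH (fun (s : ιB × (ιR × Unit)) (t : ιA) => φ (t, (s.1, s.2.1))) := by
    have h : redBR φ = rd (fun (s : ιB × ιR) (t : ιA) => φ (t, (s.1, s.2))) := rfl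
    rw [h]
    exact HH_to rfl ⟨fun s => (s.1, s.2, ()), fun s => (s.1, s.2.1),
      fun _ => rfl, fun _ => rfl⟩ (Equiv.refl _) (fun _ _ => rfl)
  refine ⟨?_, ?_, ?_⟩
  · rw [eA, eR, eAR]; linarith
  · rw [eB, eR, eBR]; linarith
  · have key : (1/2) * (vnEntropy (redA φ) + vnEntropy (redB φ) + vnEntropy (redAB φ)) - (QA + QB)
        ≤ squashedEntanglement (redAB φ) := by
      unfold squashedEntanglement
      refine le_csInf ?_ ?_
      · refine ⟨_, 1, (redAB φ).submatrix Prod.fst Prod.fst, ?_, ?_, ?_, rfl⟩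
        · exact (rd_psd (fun (s : ιA × ιB) (r : ιR) => φ (s.1, (s.2, r)))).submatrix _
        · rw [← hφ]
          simp only [Matrix.trace, diag_apply, submatrix_apply, redAB, of_apply, dotProduct,
            Pi.star_apply]
          simp [Fintype.sum_prod_type, mul_comm]
        · intro i j; simp
      · rintro x ⟨dE, ρ, hρ, htr, hext, rfl⟩
        have := bound3 φ hach dE ρ hρ htr hext
        linarith
    linarith
end

section
/- Let T be a finite set, let P and P' be probability distributions on T, let f : T → [0,1], and let 0 < ε ≤ 1/100. If Σ_{t∈T} √(P_t P'_t) f_t ≥ 1 − 3ε, then there exists t ∈ T such that f_t ≥ 1 − 18ε and 3 P_t ≥ P'_t. -/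
/-- **Good common type selection.**  If `P`, `P'` are probability distributions on a
finite set `T`, `f : T → [0,1]`, `0 < ε ≤ 1/100` and `∑ √(P_t P'_t) f_t ≥ 1 − 3ε`, then
some `t` satisfies both `f_t ≥ 1 − 18ε` and `3 P_t ≥ P'_t`. -/
theorem exists_good_type
    {T : Type*} [Fintype T]
    (P P' f : T → ℝ)
    (hP : ∀ t, 0 ≤ P t) (hPsum : ∑ t, P t = 1)
    (hP' : ∀ t, 0 ≤ P' t) (hP'sum : ∑ t, P' t = 1)
    (hf0 : ∀ t, 0 ≤ f t) (hf1 : ∀ t, f t ≤ 1)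
    (ε : ℝ) (hε0 : 0 < ε) (hε1 : ε ≤ 1 / 100)
    (h : 1 - 3 * ε ≤ ∑ t, Real.sqrt (P t * P' t) * f t) :
    ∃ t, 1 - 18 * ε ≤ f t ∧ P' t ≤ 3 * P t := by
  by_contra hc
  push Not at hc
  have key : ∀ t, Real.sqrt (P t * P' t) * f t ≤ (1 - 4 * ε) / 2 * (P t + P' t) := by
    intro t
    have hp := hP t
    have hq := hP' t
    have hs := Real.sqrt_nonneg (P t * P' t)
    have hamgm : Real.sqrt (P t * P' t) ≤ (P t + P' t) / 2 := by
      apply Real.sqrt_le_iff.mpr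
      exact ⟨by linarith, by nlinarith [sq_nonneg (P t - P' t)]⟩
    by_cases hft : 1 - 18 * ε ≤ f t
    · have h3 := hc t hft
      have h1 : Real.sqrt (P t * P' t) ≤ 48 / 100 * (P t + P' t) := by
        apply Real.sqrt_le_iff.mpr
        refine ⟨by linarith, ?_⟩
        nlinarith [mul_nonneg hq (sub_nonneg.mpr h3.le), mul_nonneg hp hq, sq_nonneg (P t)]
      have h2 : Real.sqrt (P t * P' t) * f t ≤ Real.sqrt (P t * P' t) :=
        mul_le_of_le_one_right hs (hf1 t)
      nlinarith [mul_nonneg (sub_nonneg.mpr hε1) (add_nonneg hp hq)]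
    · have h4 : f t ≤ 1 - 4 * ε := by linarith
      have h5 : Real.sqrt (P t * P' t) * f t ≤ (P t + P' t) / 2 * (1 - 4 * ε) :=
        mul_le_mul hamgm h4 (hf0 t) (by linarith)
      linarith
  have hsum := Finset.sum_le_sum (fun t (_ : t ∈ Finset.univ) => key t)
  rw [← Finset.mul_sum, Finset.sum_add_distrib, hPsum, hP'sum] at hsum
  linarith
end

section
/- Let |ψ'⟩ be a unit vector in A⊗B⊗R, let Π_A, Π_B, Π_R be orthogonal projections on A, B, R respectively, and set p = ⟨ψ'| (Π_A⊗Π_B⊗Π_R) |ψ'⟩. Suppose p > 0 and let ψ be the pure state associated to the unit vector (Π_A⊗Π_B⊗Π_R)|ψ'⟩ / √p. If Π_A ψ'^A Π_A ≤ c·I for some real c > 0, where ψ'^A = Tr_{BR} |ψ'⟩⟨ψ'|, then Tr[(ψ^A)²] ≤ c/p. -/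
open Matrix
open scoped Kronecker ComplexOrder

/-- The pure state `|v⟩⟨v|` associated to a vector `v`. -/
noncomputable def pureState {ι : Type*} (v : ι → ℂ) : Matrix ι ι ℂ :=
  Matrix.vecMulVec v (star v)

theorem aux_N {ιA ιQ : Type} [Fintype ιA] [Fintype ιQ]
    (P : Matrix ιA ιA ℂ) (K : Matrix ιQ ιQ ℂ) (v : ιA × ιQ → ℂ) :
    (Matrix.of fun a q => ((P ⊗ₖ K).mulVec v) (a, q)) =
      P * (Matrix.of fun a q => v (a, q)) * Kᵀ := by
  ext a q
  simp only [Matrix.of_apply, Matrix.mulVec, dotProduct, Matrix.mul_apply, Matrix.transpose_apply,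
    Matrix.kroneckerMap_apply, Fintype.sum_prod_type, Finset.sum_mul]
  rw [Finset.sum_comm]
  refine Finset.sum_congr rfl fun x _ => Finset.sum_congr rfl fun y _ => ?_
  ring

theorem aux_red {ιA ιB ιR : Type} [Fintype ιB] [Fintype ιR]
    (v : ιA × (ιB × ιR) → ℂ) :
    redA v = (Matrix.of fun a q => v (a, q)) * (Matrix.of fun a q => v (a, q))ᴴ := by
  ext a b
  simp [redA, Matrix.mul_apply]

theorem aux_dot {ιA ιQ : Type} [Fintype ιA] [Fintype ιQ] (v w : ιA × ιQ → ℂ) :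
    star v ⬝ᵥ w = ((Matrix.of fun a q => v (a, q))ᴴ * (Matrix.of fun a q => w (a, q))).trace := by
  simp only [dotProduct, Matrix.trace, Matrix.mul_apply, Fintype.sum_prod_type, Matrix.diag_apply,
    Matrix.conjTranspose_apply, Matrix.of_apply, Pi.star_apply]
  rw [Finset.sum_comm]

theorem aux_main {ιA ιQ : Type} [Fintype ιA] [DecidableEq ιA] [Fintype ιQ] [DecidableEq ιQ]
    (P : Matrix ιA ιA ℂ) (hP : Pᴴ = P) (hPi : P * P = P)
    (Q : Matrix ιQ ιQ ℂ) (hQ : Qᴴ = Q) (hQi : Q * Q = Q)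
    (M N : Matrix ιA ιQ ℂ) (hN : N = P * M * Q) (c : ℂ)
    (hb : (c • (1 : Matrix ιA ιA ℂ) - P * (M * Mᴴ) * P).PosSemidef) :
    ((N * Nᴴ) * (N * Nᴴ)).trace ≤ c * (Mᴴ * N).trace := by
  have e1 : N * Nᴴ = P * M * Q * Mᴴ * P := by
    rw [hN]
    simp only [Matrix.conjTranspose_mul, hP, hQ, Matrix.mul_assoc]
    rw [← Matrix.mul_assoc Q Q, hQi]
  have e2 : (N * Nᴴ).trace = (Mᴴ * N).trace := by
    rw [e1, Matrix.trace_mul_comm, hN, Matrix.trace_mul_comm Mᴴ]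
    simp only [← Matrix.mul_assoc, hPi]
  have e3 : ((1 - Q)ᴴ * (1 - Q)) = 1 - Q := by
    simp [Matrix.mul_sub, Matrix.sub_mul, hQ, hQi]
  have h1 : ((P * M) * (1 - Q) * (P * M)ᴴ).PosSemidef := by
    apply Matrix.PosSemidef.mul_mul_conjTranspose_same
    rw [← e3]
    exact Matrix.posSemidef_conjTranspose_mul_self _
  have h2 : (c • (1 : Matrix ιA ιA ℂ) - N * Nᴴ).PosSemidef := by
    have := hb.add h1
    convert this using 1
    rw [e1]
    simp only [Matrix.conjTranspose_mul, hP, Matrix.mul_sub, Matrix.sub_mul, Matrix.mul_one,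
      Matrix.mul_assoc]
    abel
  have h3 := (h2.conjTranspose_mul_mul_same N).trace_nonneg
  have e4 : (Nᴴ * (c • (1 : Matrix ιA ιA ℂ) - N * Nᴴ) * N).trace =
      c * (Mᴴ * N).trace - ((N * Nᴴ) * (N * Nᴴ)).trace := by
    rw [← e2, Matrix.mul_sub, Matrix.sub_mul, Matrix.trace_sub]
    congr 1
    · simp [Matrix.trace_mul_comm N]
    · rw [Matrix.mul_assoc, Matrix.trace_mul_comm]
      simp only [Matrix.mul_assoc]
  rw [e4] at h3
  exact sub_nonneg.mp h3

/-- **Purity bound after a typical projection.**  Let `|ψ'⟩` be a unit vector on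
`A ⊗ B ⊗ R`, `Π_A, Π_B, Π_R` orthogonal projections, `p = ⟨ψ'|Π_A⊗Π_B⊗Π_R|ψ'⟩ > 0`, and
`ψ` the pure state of the renormalized vector `(Π_A⊗Π_B⊗Π_R)|ψ'⟩/√p`.  If
`Π_A ψ'^A Π_A ≤ c·I` then `Tr[(ψ^A)²] ≤ c/p`. -/
theorem purity_after_projection
    {ιA ιB ιR : Type} [Fintype ιA] [DecidableEq ιA] [Fintype ιB] [DecidableEq ιB]
    [Fintype ιR] [DecidableEq ιR]
    (ψ' : ιA × (ιB × ιR) → ℂ) (hψ' : star ψ' ⬝ᵥ ψ' = 1)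
    (PA : Matrix ιA ιA ℂ) (hAh : PA.IsHermitian) (hAi : PA * PA = PA)
    (PB : Matrix ιB ιB ℂ) (hBh : PB.IsHermitian) (hBi : PB * PB = PB)
    (PR : Matrix ιR ιR ℂ) (hRh : PR.IsHermitian) (hRi : PR * PR = PR)
    (c : ℝ) (hc : 0 < c)
    (p : ℝ)
    (hp : (p : ℂ) = star ψ' ⬝ᵥ ((PA ⊗ₖ (PB ⊗ₖ PR)).mulVec ψ'))
    (hppos : 0 < p)
    (hbound : ((c : ℂ) • (1 : Matrix ιA ιA ℂ) - PA * redA ψ' * PA).PosSemidef) :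
    ((redA fun i => ((PA ⊗ₖ (PB ⊗ₖ PR)).mulVec ψ') i / (Real.sqrt p : ℂ)) *
      (redA fun i => ((PA ⊗ₖ (PB ⊗ₖ PR)).mulVec ψ') i / (Real.sqrt p : ℂ))).trace.re
      ≤ c / p := by
  have hK : (PB ⊗ₖ PR)ᴴ = PB ⊗ₖ PR := by
    rw [Matrix.conjTranspose_kronecker, hBh.eq, hRh.eq]
  have hKi : (PB ⊗ₖ PR) * (PB ⊗ₖ PR) = PB ⊗ₖ PR := by
    rw [← Matrix.mul_kronecker_mul, hBi, hRi]
  have key := aux_main PA hAh.eq hAi (PB ⊗ₖ PR)ᵀ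
    (Matrix.IsHermitian.transpose hK).eq
    (by rw [← Matrix.transpose_mul, hKi]) _ _ (aux_N PA (PB ⊗ₖ PR) ψ') c
    (by rw [← aux_red]; exact hbound)
  rw [← aux_dot, ← aux_red, ← hp] at key
  set w := (PA ⊗ₖ (PB ⊗ₖ PR)).mulVec ψ'
  have hs : ((Real.sqrt p : ℝ) : ℂ) * ((Real.sqrt p : ℝ) : ℂ) = p := by
    rw [← Complex.ofReal_mul, Real.mul_self_sqrt hppos.le]
  have hr : (redA fun i => w i / (Real.sqrt p : ℂ)) = ((p⁻¹ : ℝ) : ℂ) • redA w := by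
    ext a b
    simp only [redA, Matrix.of_apply, Matrix.smul_apply, smul_eq_mul, Finset.mul_sum]
    refine Finset.sum_congr rfl fun q _ => ?_
    rw [star_div₀, div_mul_div_comm]
    simp only [Complex.star_def, Complex.conj_ofReal]
    rw [hs]
    push_cast
    ring
  have k2 := (Complex.le_def.mp key).1
  rw [← Complex.ofReal_mul, Complex.ofReal_re] at k2
  rw [hr, Matrix.smul_mul, Matrix.mul_smul, smul_smul, Matrix.trace_smul, smul_eq_mul,
    ← Complex.ofReal_mul, Complex.re_ofReal_mul]
  calc _ ≤ p⁻¹ * p⁻¹ * (c * p) := by gcongr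
    _ = c / p := by field_simp
end
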